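/- $\sum_{n=1}^{\infty} \frac{(-1)^{n-1}}{n^3 \binom{2n}{n}}\left(H_{2n-1}^{(2)} - \frac{123}{16} H_{n-1}^{(2)}\right) = \frac{451\,\zeta(5)}{40} - \frac{14\pi^2 \zeta(3)}{15}$. -/

import Mathlib

open Filter Topology

/-- Generalized harmonic number `H_n^{(s)} = ∑_{k=1}^n 1/k^s`. -/
noncomputable def H (s n : ℕ) : ℝ := ∑ k ∈ Finset.range n, 1 / ((k:ℝ) + 1) ^ s

/-- The Riemann zeta value `ζ(s) = ∑_{n ≥ 1} 1/n^s`. -/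
noncomputable def zeta (s : ℕ) : ℝ := ∑' n : ℕ, 1 / ((n:ℝ) + 1) ^ s

/-!
With `wₙ = (-1)ⁿ / ((n + 1)³ binom(2n + 2, n + 1))`, the sum is
`∑ wₙ (H_{2n+1}^{(2)} + 3/4 H_n^{(2)} - 27 / (4 (n + 1)²))` plus `27/8` times
`∑ wₙ (2 / (n + 1)² - 5/2 H_n^{(2)})`. The latter is Koecher's series for `ζ(5)`, which comes from a
telescoping partial fraction expansion of `1 / n⁵`.

For the former, take a very-well-poised series `Ω(a; b, c, d, e)` whose parameters are linear in a
formal variable `X`, with two free slopes. Iterating `a ↦ a + 1` turns it into a fast series over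
central binomial coefficients. The coefficients of `X³` at the slopes `(7, 3)`, `(1, 1)` and
`(0, 0)` have a combination in which the harmonic numbers of order `3` cancel, leaving the wanted
series up to a telescoping part. The slow side is summed by Dougall's `₅F₄` theorem at `(7, 3)`, and
the difference between `(1, 1)` and `(0, 0)` is an alternating Euler sum.
-/

namespace CentralBinomialSum

open Finset PowerSeries
open scoped NNReal

section Harmonic

lemma H_zero (s : ℕ) : H s 0 = 0 := by simp [H]

lemma H_succ (s n : ℕ) : H s (n + 1) = H s n + 1 / ((n : ℝ) + 1) ^ s := sum_range_succ _ _

lemma H_add (s m d : ℕ) : H s (m + d) = H s m + ∑ q ∈ range d, 1 / ((m : ℝ) + q + 1) ^ s := by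
  simp only [H, sum_range_add, Nat.cast_add]

lemma H_nonneg (s n : ℕ) : 0 ≤ H s n := sum_nonneg fun _ _ => by positivity

lemma hasSum_zeta {s : ℕ} (hs : 2 ≤ s) : HasSum (fun n : ℕ => 1 / ((n : ℝ) + 1) ^ s) (zeta s) := by
  have h := (summable_nat_add_iff 1).2 (Real.summable_one_div_nat_pow.2 (show 1 < s by omega))
  simpa [zeta] using h.hasSum

lemma tendsto_H {s : ℕ} (hs : 2 ≤ s) : Tendsto (H s) atTop (𝓝 (zeta s)) :=
  (hasSum_zeta hs).tendsto_sum_nat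

lemma H_le_zeta {s : ℕ} (hs : 2 ≤ s) (n : ℕ) : H s n ≤ zeta s :=
  sum_le_hasSum _ (fun _ _ => by positivity) (hasSum_zeta hs)

lemma zeta_two : zeta 2 = Real.pi ^ 2 / 6 := by
  have h := (hasSum_nat_add_iff' 1).2 hasSum_zeta_two
  simpa [zeta] using h.tsum_eq

/-- The harmonic number over half-integers, `∑_{0 ≤ k < n} 1/(k + 1/2)^s`. -/
noncomputable def halfH (s n : ℕ) : ℝ := ∑ k ∈ range n, 1 / ((k : ℝ) + 1 / 2) ^ s

lemma halfH_zero (s : ℕ) : halfH s 0 = 0 := by simp [halfH]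

lemma halfH_succ (s n : ℕ) : halfH s (n + 1) = halfH s n + 1 / ((n : ℝ) + 1 / 2) ^ s :=
  sum_range_succ _ _

lemma halfH_eq (s n : ℕ) : halfH s n = 2 ^ s * H s (2 * n) - H s n := by
  induction n with
  | zero => simp [halfH_zero, H_zero]
  | succ n ih =>
    rw [halfH_succ, ih, show 2 * (n + 1) = 2 * n + 1 + 1 by ring, H_succ, H_succ, H_succ,
      show (n : ℝ) + 1 / 2 = (2 * n + 1) / 2 by ring, div_pow]
    push_cast
    rw [show 2 * (n : ℝ) + 1 + 1 = 2 * (n + 1) by ring, mul_pow]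
    field_simp
    ring

lemma tendsto_two_mul_atTop : Tendsto (fun n : ℕ => 2 * n) atTop atTop :=
  tendsto_id.const_mul_atTop' two_pos

lemma tendsto_halfH {s : ℕ} (hs : 2 ≤ s) :
    Tendsto (halfH s) atTop (𝓝 ((2 ^ s - 1) * zeta s)) := by
  have h := (((tendsto_H hs).comp tendsto_two_mul_atTop).const_mul (2 ^ s)).sub (tendsto_H hs)
  rw [sub_one_mul]
  exact h.congr fun n => (halfH_eq s n).symm

/-- The alternating harmonic number `∑_{1 ≤ k ≤ n} (-1)^k/k^s`. -/
noncomputable def altH (s n : ℕ) : ℝ := ∑ k ∈ range n, (-1 : ℝ) ^ (k + 1) / ((k : ℝ) + 1) ^ s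

lemma altH_zero (s : ℕ) : altH s 0 = 0 := by simp [altH]

lemma altH_succ (s n : ℕ) :
    altH s (n + 1) = altH s n + (-1 : ℝ) ^ (n + 1) / ((n : ℝ) + 1) ^ s := sum_range_succ _ _

lemma altH_add (s m d : ℕ) :
    altH s (m + d) = altH s m + ∑ q ∈ range d, (-1 : ℝ) ^ (m + q + 1) / ((m : ℝ) + q + 1) ^ s := by
  simp only [altH, sum_range_add, Nat.cast_add]

lemma altH_two_mul (s n : ℕ) : altH s (2 * n) = 2 / 2 ^ s * H s n - H s (2 * n) := by
  induction n with
  | zero => simp [altH_zero, H_zero]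
  | succ n ih =>
    rw [show 2 * (n + 1) = 2 * n + 1 + 1 by ring, altH_succ, altH_succ, ih, H_succ, H_succ, H_succ,
      (even_two_mul n).add_one.neg_one_pow, (even_two_mul n).add_one.add_one.neg_one_pow]
    push_cast
    rw [show 2 * (n : ℝ) + 1 + 1 = 2 * (n + 1) by ring, mul_pow]
    field_simp
    ring

lemma tendsto_altH {s : ℕ} (hs : 2 ≤ s) :
    Tendsto (altH s) atTop (𝓝 (-(1 - 2 / 2 ^ s) * zeta s)) := by
  have hsum : Summable fun k : ℕ => (-1 : ℝ) ^ (k + 1) / ((k : ℝ) + 1) ^ s :=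
    .of_norm <| (hasSum_zeta hs).summable.congr fun n => by
      rw [norm_div, norm_pow, norm_neg, norm_one, one_pow, Real.norm_of_nonneg (by positivity)]
  have heven := ((tendsto_H hs).const_mul (2 / 2 ^ s)).sub
    ((tendsto_H hs).comp tendsto_two_mul_atTop)
  have hlim := tendsto_nhds_unique (hsum.hasSum.tendsto_sum_nat.comp tendsto_two_mul_atTop)
    (heven.congr fun n => (altH_two_mul s n).symm)
  have h := hsum.hasSum.tendsto_sum_nat
  rwa [hlim, show 2 / 2 ^ s * zeta s - zeta s = -(1 - 2 / 2 ^ s) * zeta s by ring] at h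

end Harmonic

section TruncatedSeminorm

/-- The weighted `ℓ¹` seminorm `∑_{i < N} |coeff i f| ρ^i` of a truncated power series; it controls
the first `N` coefficients and is submultiplicative. -/
noncomputable def truncSeminorm (ρ : ℝ≥0) (N : ℕ) : RingSeminorm ℝ⟦X⟧ where
  toFun f := ∑ i ∈ range N, |coeff i f| * ρ ^ i
  map_zero' := by simp
  neg' f := by simp
  add_le' f g := by
    rw [← sum_add_distrib]
    gcongr with i
    rw [← add_mul, map_add]
    gcongr
    exact abs_add_le _ _
  mul_le' f g := by
    have hcoeff (n : ℕ) : |coeff n (f * g)| * (ρ : ℝ) ^ n ≤ ∑ i ∈ range (n + 1),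
        |coeff i f| * ρ ^ i * (|coeff (n - i) g| * ρ ^ (n - i)) := by
      rw [coeff_mul, Nat.sum_antidiagonal_eq_sum_range_succ fun i j => coeff i f * coeff j g]
      refine (mul_le_mul_of_nonneg_right (abs_sum_le_sum_abs _ _) (by positivity)).trans_eq ?_
      rw [sum_mul]
      refine sum_congr rfl fun i hi => ?_
      rw [abs_mul, ← pow_mul_pow_sub (ρ : ℝ) (Nat.lt_succ_iff.1 (mem_range.1 hi))]
      ring
    refine (sum_le_sum fun n _ => hcoeff n).trans ?_
    rw [sum_range_diag_flip N fun i j => |coeff i f| * (ρ : ℝ) ^ i * (|coeff j g| * ρ ^ j), sum_mul]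
    gcongr with i
    rw [← mul_sum]
    gcongr
    exact Nat.sub_le _ _

variable {ρ : ℝ≥0} {N : ℕ}

lemma abs_coeff_mul_pow_le (f : ℝ⟦X⟧) {i : ℕ} (hi : i < N) :
    |coeff i f| * ρ ^ i ≤ truncSeminorm ρ N f :=
  single_le_sum (f := fun i => |coeff i f| * (ρ : ℝ) ^ i) (fun _ _ => by positivity)
    (mem_range.2 hi)

lemma tendsto_coeff_of_tendsto_truncSeminorm {ι : Type*} {l : Filter ι} {f : ι → ℝ⟦X⟧}
    (hρ : 0 < ρ) (h : Tendsto (fun n => truncSeminorm ρ N (f n)) l (𝓝 0)) {i : ℕ} (hi : i < N) :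
    Tendsto (fun n => coeff i (f n)) l (𝓝 0) := by
  have hρi : (0 : ℝ) < ρ ^ i := by positivity
  refine squeeze_zero_norm (fun n => ?_) (by simpa using h.div_const ((ρ : ℝ) ^ i))
  rw [Real.norm_eq_abs, le_div_iff₀ hρi]
  exact abs_coeff_mul_pow_le (f n) hi

lemma truncSeminorm_bounded_of_tendsto_coeff {f : ℕ → ℝ⟦X⟧}
    (h : ∀ i, ∃ l, Tendsto (fun n => coeff i (f n)) atTop (𝓝 l)) :
    ∃ C, ∀ n, truncSeminorm ρ N (f n) ≤ C := by
  choose l hl using h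
  have hlim : Tendsto (fun n => truncSeminorm ρ N (f n)) atTop
      (𝓝 (∑ i ∈ range N, |l i| * (ρ : ℝ) ^ i)) :=
    tendsto_finsetSum _ fun i _ => (hl i).abs.mul_const _
  obtain ⟨C, hC⟩ := hlim.bddAbove_range
  exact ⟨C, fun n => hC ⟨n, rfl⟩⟩

lemma truncSeminorm_sum_le {ι : Type*} (s : Finset ι) (f : ι → ℝ⟦X⟧) :
    truncSeminorm ρ N (∑ i ∈ s, f i) ≤ ∑ i ∈ s, truncSeminorm ρ N (f i) :=
  le_sum_of_subadditive _ (map_zero _).le (map_add_le_add _) _ _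

lemma truncSeminorm_C_le (r : ℝ) : truncSeminorm ρ N (C r) ≤ |r| := by
  change ∑ i ∈ range N, |coeff i (C r)| * (ρ : ℝ) ^ i ≤ |r|
  refine (sum_le_sum (g := fun i => if i = 0 then |r| else 0) fun i _ => ?_).trans ?_
  · rcases i with _ | i <;> simp [coeff_C]
  · rw [sum_ite_eq']
    split_ifs <;> simp

lemma truncSeminorm_one_le : truncSeminorm ρ N 1 ≤ 1 := by
  simpa using truncSeminorm_C_le (ρ := ρ) (N := N) 1

lemma truncSeminorm_X_le : truncSeminorm ρ N X ≤ ρ := by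
  change ∑ i ∈ range N, |coeff i (X : ℝ⟦X⟧)| * (ρ : ℝ) ^ i ≤ ρ
  refine (sum_le_sum (g := fun i => if i = 1 then (ρ : ℝ) else 0) fun i _ => ?_).trans ?_
  · rw [coeff_X]
    split_ifs with h <;> simp [h]
  · rw [sum_ite_eq']
    split_ifs <;> simp

lemma truncSeminorm_prod_le {ι : Type*} (s : Finset ι) (f : ι → ℝ⟦X⟧) :
    truncSeminorm ρ N (∏ i ∈ s, f i) ≤ ∏ i ∈ s, truncSeminorm ρ N (f i) := by
  classical
  induction s using Finset.induction_on with
  | empty => simpa using truncSeminorm_one_le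
  | insert i s hi ih =>
    rw [prod_insert hi, prod_insert hi]
    exact (map_mul_le_mul _ _ _).trans (by gcongr)

lemma truncSeminorm_mul_le_of_le {f g : ℝ⟦X⟧} {c d : ℝ} (hf : truncSeminorm ρ N f ≤ c)
    (hg : truncSeminorm ρ N g ≤ d) : truncSeminorm ρ N (f * g) ≤ c * d :=
  (map_mul_le_mul _ _ _).trans
    (mul_le_mul hf hg (apply_nonneg _ _) ((apply_nonneg _ _).trans hf))

end TruncatedSeminorm

section LinearFactors

/-- The linear power series `m + α X`. -/
noncomputable def lin (m α : ℝ) : ℝ⟦X⟧ := C m + C α * X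

lemma constantCoeff_lin (m α : ℝ) : constantCoeff (lin m α) = m := by simp [lin]

lemma lin_ne_zero {m : ℝ} (hm : m ≠ 0) (α : ℝ) : constantCoeff (lin m α) ≠ 0 := by
  rwa [constantCoeff_lin]

lemma lin_mul_inv {m : ℝ} (hm : m ≠ 0) (α : ℝ) : lin m α * (lin m α)⁻¹ = 1 :=
  PowerSeries.mul_inv_cancel _ (lin_ne_zero hm α)

variable {ρ : ℝ≥0} {N : ℕ}

lemma truncSeminorm_lin_le (m α : ℝ) : truncSeminorm ρ N (lin m α) ≤ |m| + |α| * ρ :=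
  (map_add_le_add _ _ _).trans <| add_le_add (truncSeminorm_C_le m) <|
    truncSeminorm_mul_le_of_le (truncSeminorm_C_le α) truncSeminorm_X_le

lemma truncSeminorm_inv_lin_le {m α : ℝ} (h : |α| * ρ < m) :
    truncSeminorm ρ N (lin m α)⁻¹ ≤ 1 / (m - |α| * ρ) := by
  have hm : 0 < m := lt_of_le_of_lt (by positivity) h
  set g := (lin m α)⁻¹
  have hg : g = C m⁻¹ * (1 - C α * X * g) := by
    have h1 : C m⁻¹ * C m = (1 : ℝ⟦X⟧) := by rw [← map_mul, inv_mul_cancel₀ hm.ne', map_one]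
    have h2 : lin m α * g = 1 := lin_mul_inv hm.ne' α
    rw [lin] at h2
    linear_combination (-g) * h1 + C m⁻¹ * h2
  have hle : truncSeminorm ρ N g ≤ |m⁻¹| * (1 + |α| * ρ * truncSeminorm ρ N g) := by
    conv_lhs => rw [hg]
    refine truncSeminorm_mul_le_of_le (truncSeminorm_C_le _) ((map_sub_le_add _ _ _).trans ?_)
    exact add_le_add truncSeminorm_one_le <| truncSeminorm_mul_le_of_le
      (truncSeminorm_mul_le_of_le (truncSeminorm_C_le α) truncSeminorm_X_le) le_rfl
  rw [abs_of_pos (inv_pos.2 hm), inv_mul_eq_div, le_div_iff₀ hm] at hle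
  rw [le_div_iff₀ (by linarith)]
  linarith

lemma truncSeminorm_lin_mul_inv_lin_le {m α m' α' c : ℝ} (h' : |α'| * ρ < m')
    (h : |m| + |α| * ρ ≤ c * (m' - |α'| * ρ)) :
    truncSeminorm ρ N (lin m α * (lin m' α')⁻¹) ≤ c := by
  refine (truncSeminorm_mul_le_of_le (truncSeminorm_lin_le m α)
    (truncSeminorm_inv_lin_le h')).trans ?_
  rwa [mul_one_div, div_le_iff₀ (by linarith)]

end LinearFactors

section PowerSums

/-- `f` behaves like `c ∏ (1 + rᵢ X)` with power sums `P k = ∑ rᵢ ^ k` for `k ≥ 1`; a factor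
`1 + rᵢ X` in the denominator contributes to `P k` with a negative sign. The value `P 0` is
irrelevant. -/
structure HasPowerSums (f : ℝ⟦X⟧) (c : ℝ) (P : ℕ → ℝ) : Prop where
  constantCoeff_eq : constantCoeff f = c
  derivative_eq : d⁄dX ℝ f = f * PowerSeries.mk fun k => (-1) ^ k * P (k + 1)

namespace HasPowerSums

variable {f g : ℝ⟦X⟧} {c d : ℝ} {P Q : ℕ → ℝ}

protected lemma congr (hf : HasPowerSums f c P) (hc : c = d) (hP : ∀ k, P (k + 1) = Q (k + 1)) :
    HasPowerSums f d Q := by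
  refine ⟨hc ▸ hf.constantCoeff_eq, ?_⟩
  rw [hf.derivative_eq]
  simp only [hP]

protected lemma one : HasPowerSums 1 1 0 :=
  ⟨by simp, by simp [PowerSeries.ext_iff]⟩

protected lemma lin {m : ℝ} (hm : m ≠ 0) (α : ℝ) :
    HasPowerSums (lin m α) m fun k => (α / m) ^ k := by
  refine ⟨constantCoeff_lin m α, ?_⟩
  obtain ⟨r, rfl⟩ : ∃ r, α = r * m := ⟨α / m, (div_mul_cancel₀ α hm).symm⟩
  ext k
  simp only [mul_div_cancel_right₀ _ hm]
  rcases k with _ | k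
  · simp [lin, mul_comm]
  · simp only [coeff_derivative, lin, add_mul, mul_assoc, map_add, coeff_C_mul, coeff_succ_X_mul,
      coeff_mk]
    simp only [coeff_succ_C, Nat.cast_add, Nat.cast_one, zero_mul, coeff_X, Nat.add_eq_right,
      Nat.add_eq_zero_iff, one_ne_zero, and_false, ↓reduceIte, mul_zero, add_zero]
    ring

protected lemma mul (hf : HasPowerSums f c P) (hg : HasPowerSums g d Q) :
    HasPowerSums (f * g) (c * d) (P + Q) := by
  refine ⟨by rw [map_mul, hf.constantCoeff_eq, hg.constantCoeff_eq], ?_⟩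
  have hmk : (PowerSeries.mk fun k => (-1) ^ k * (P + Q) (k + 1)) =
      (PowerSeries.mk fun k => (-1) ^ k * P (k + 1)) +
        PowerSeries.mk fun k => (-1 : ℝ) ^ k * Q (k + 1) := by
    ext k
    simp [mul_add]
  rw [Derivation.leibniz, hf.derivative_eq, hg.derivative_eq, hmk, smul_eq_mul, smul_eq_mul]
  ring

protected lemma neg (hf : HasPowerSums f c P) : HasPowerSums (-f) (-c) P :=
  ⟨by rw [map_neg, hf.constantCoeff_eq], by rw [map_neg, hf.derivative_eq, neg_mul]⟩

protected lemma inv (hf : HasPowerSums f c P) (hc : c ≠ 0) :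
    HasPowerSums f⁻¹ c⁻¹ (-P) := by
  refine ⟨by rw [constantCoeff_inv, hf.constantCoeff_eq], ?_⟩
  have hmk : (PowerSeries.mk fun k => (-1) ^ k * (-P) (k + 1)) =
      -PowerSeries.mk fun k => (-1 : ℝ) ^ k * P (k + 1) := by
    ext k
    simp
  have hinv : f * f⁻¹ = 1 := PowerSeries.mul_inv_cancel _ (by rwa [hf.constantCoeff_eq])
  rw [derivative_inv', hf.derivative_eq, hmk]
  linear_combination (-f⁻¹ * PowerSeries.mk fun k => (-1) ^ k * P (k + 1)) * hinv

protected lemma inv_lin {m : ℝ} (hm : m ≠ 0) (α : ℝ) :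
    HasPowerSums (lin m α)⁻¹ m⁻¹ fun k => -(α / m) ^ k :=
  (HasPowerSums.lin hm α).inv hm

lemma succ_mul_coeff (hf : HasPowerSums f c P) (n : ℕ) : ((n : ℝ) + 1) * coeff (n + 1) f =
    ∑ i ∈ range (n + 1), coeff i f * ((-1) ^ (n - i) * P (n - i + 1)) := by
  have h := congrArg (coeff n) hf.derivative_eq
  rw [coeff_derivative, coeff_mul, Nat.sum_antidiagonal_eq_sum_range_succ
    fun i j => coeff i f * coeff j (PowerSeries.mk fun k => (-1 : ℝ) ^ k * P (k + 1))] at h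
  simpa only [coeff_mk, mul_comm] using h

lemma coeff_zero (hf : HasPowerSums f c P) : coeff 0 f = c := by
  simpa using hf.constantCoeff_eq

lemma coeff_one (hf : HasPowerSums f c P) : coeff 1 f = c * P 1 := by
  simpa [sum_range_succ, hf.constantCoeff_eq] using hf.succ_mul_coeff 0

lemma coeff_two (hf : HasPowerSums f c P) : coeff 2 f = c * ((P 1 ^ 2 - P 2) / 2) := by
  have h := hf.succ_mul_coeff 1
  simp only [sum_range_succ, range_zero, sum_empty, hf.coeff_zero, hf.coeff_one] at h
  norm_num at h
  linear_combination h / 2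

lemma coeff_three (hf : HasPowerSums f c P) :
    coeff 3 f = c * ((P 1 ^ 3 - 3 * P 1 * P 2 + 2 * P 3) / 6) := by
  have h := hf.succ_mul_coeff 2
  simp only [sum_range_succ, range_zero, sum_empty, hf.coeff_zero, hf.coeff_one, hf.coeff_two] at h
  norm_num at h
  linear_combination h / 3

lemma coeff_five (hf : HasPowerSums f c P) (hP : P 1 = 0) :
    coeff 5 f = c * (P 5 / 5 - P 2 * P 3 / 6) := by
  have h4 := hf.succ_mul_coeff 3
  have h5 := hf.succ_mul_coeff 4
  simp only [sum_range_succ, range_zero, sum_empty, hf.coeff_zero, hf.coeff_one, hf.coeff_two,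
    hf.coeff_three, hP] at h4 h5
  norm_num [hP] at h4 h5
  linear_combination h5 / 5

lemma exists_tendsto_coeff {f : ℕ → ℝ⟦X⟧} {P : ℕ → ℕ → ℝ}
    (hf : ∀ n, HasPowerSums (f n) c (P n))
    (hP : ∀ k, ∃ p, Tendsto (fun n => P n (k + 1)) atTop (𝓝 p)) (k : ℕ) :
    ∃ l, Tendsto (fun n => coeff k (f n)) atTop (𝓝 l) := by
  choose p hp using hP
  induction k using Nat.strong_induction_on with
  | _ k ih =>
    rcases k with _ | k
    · exact ⟨c, tendsto_const_nhds.congr fun n => (hf n).coeff_zero.symm⟩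
    choose! l hl using ih
    have hsum : Tendsto (fun n => ((k : ℝ) + 1) * coeff (k + 1) (f n)) atTop
        (𝓝 (∑ i ∈ range (k + 1), l i * ((-1) ^ (k - i) * p (k - i)))) := by
      simp only [(hf _).succ_mul_coeff]
      exact tendsto_finsetSum _ fun i hi => (hl i (mem_range.1 hi)).mul ((hp _).const_mul _)
    refine ⟨_, (hsum.div_const ((k : ℝ) + 1)).congr fun n => ?_⟩
    rw [mul_div_cancel_left₀ _ (by positivity)]

end HasPowerSums

end PowerSums

section WellPoised

lemma sum_range_eq_of_contiguous {R : Type*} [CommRing R] {F G : ℕ → ℕ → R} {r : ℕ → R}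
    (h : ∀ n j, F n j = r n * F (n + 1) j + G n j - G n (j + 1)) (N K : ℕ) :
    ∑ j ∈ range K, F 0 j = (∏ i ∈ range N, r i) * ∑ j ∈ range K, F N j +
      ∑ n ∈ range N, (∏ i ∈ range n, r i) * (G n 0 - G n K) := by
  induction N with
  | zero => simp
  | succ N ih =>
    have hN : ∑ j ∈ range K, F N j = r N * ∑ j ∈ range K, F (N + 1) j + (G N 0 - G N K) := by
      simp only [h N, add_sub_assoc]
      rw [sum_add_distrib, sum_range_sub', mul_sum]
    rw [ih, hN, sum_range_succ, prod_range_succ]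
    ring

/-- The product `(b + x) (c + x) (d + x) (e + x)`. -/
def quartic {R : Type*} [CommRing R] (b c d e x : R) : R := (b + x) * (c + x) * (d + x) * (e + x)

/-- The lower factors `∏ (1 + a - y + x)` of a very-well-poised series, over `y` in `b, c, d, e`. -/
def wpLower {R : Type*} [CommRing R] (a b c d e x : R) : R :=
  quartic (1 + a - b) (1 + a - c) (1 + a - d) (1 + a - e) x

/-- The product of `1 + a - x - y` over the six pairs from `b, c, d, e`. -/
def pairProd {R : Type*} [CommRing R] (a b c d e : R) : R :=
  (1 + a - b - c) * (1 + a - b - d) * (1 + a - b - e) * (1 + a - c - d) * (1 + a - c - e) *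
    (1 + a - d - e)

/-- The factor `(1 + 2a - s) (2 + 2a - s)`, where `s = b + c + d + e`. -/
def excess {R : Type*} [CommRing R] (a b c d e : R) : R :=
  (1 + 2 * a - (b + c + d + e)) * (2 + 2 * a - (b + c + d + e))

/-- The polynomial `x² (2 + 2a - s) + ⋯` of the certificate for the shift `a ↦ a + 1` in a
very-well-poised series, found by solving `quartic_certificate` for a quadratic in `x`. -/
def certPoly {R : Type*} [CommRing R] (a b c d e x : R) : R :=
  let s := b + c + d + e
  let s₂ := b * c + b * d + b * e + c * d + c * e + d * e
  let s₃ := b * c * d + b * c * e + b * d * e + c * d * e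
  (2 + 2 * a - s) * (x ^ 2 + (3 * a - s + 1) * x) +
    (5 * a ^ 3 - 6 * a ^ 2 * s + 2 * a * s ^ 2 + a * s₂ - s * s₂ + s₃ + 9 * a ^ 2 - 7 * a * s +
      s ^ 2 + s₂ + 5 * a - 2 * s + 1)

lemma certPoly_eq_quadratic {R : Type*} [CommRing R] (a b c d e x : R) :
    certPoly a b c d e x = (2 + 2 * a - (b + c + d + e)) * x ^ 2 +
      (2 + 2 * a - (b + c + d + e)) * (3 * a - (b + c + d + e) + 1) * x +
        certPoly a b c d e 0 := by
  unfold certPoly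
  ring

lemma quartic_certificate {R : Type*} [CommRing R] (a b c d e x : R) :
    certPoly a b c d e x * wpLower a b c d e x -
      certPoly a b c d e (x + 1) * quartic b c d e x =
    (a + 2 * x) * excess a b c d e * wpLower a b c d e x +
      (a + 1 + 2 * x) * pairProd a b c d e := by
  unfold certPoly wpLower quartic excess pairProd
  ring

variable {k : Type*} [Field k]

/-- The products `∏_{i < j} (b+i)(c+i)(d+i)(e+i) / ((1+a-b+i)(1+a-c+i)(1+a-d+i)(1+a-e+i))` of the
very-well-poised series `Ω(a; b, c, d, e) = ∑ (a + 2j) wpProd a b c d e j`, with power series as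
parameters. -/
noncomputable def wpProd (a b c d e : k⟦X⟧) (j : ℕ) : k⟦X⟧ :=
  ∏ i ∈ range j, quartic b c d e i * (wpLower a b c d e i)⁻¹

lemma wpProd_zero (a b c d e : k⟦X⟧) : wpProd a b c d e 0 = 1 := prod_range_zero _

lemma wpProd_succ (a b c d e : k⟦X⟧) (j : ℕ) : wpProd a b c d e (j + 1) = wpProd a b c d e j *
    (quartic b c d e j * (wpLower a b c d e j)⁻¹) :=
  prod_range_succ _ _

lemma wpLower_add_one {R : Type*} [CommRing R] (a b c d e x : R) :
    wpLower (a + 1) b c d e x = wpLower a b c d e (x + 1) := by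
  unfold wpLower quartic
  ring

lemma wpProd_add_one {a b c d e : k⟦X⟧} (h : ∀ i : ℕ, constantCoeff (wpLower a b c d e i) ≠ 0)
    (j : ℕ) : wpProd (a + 1) b c d e j =
      wpProd a b c d e j * (wpLower a b c d e 0 * (wpLower a b c d e j)⁻¹) := by
  induction j with
  | zero =>
    have h0 := PowerSeries.mul_inv_cancel _ (h 0)
    simp only [Nat.cast_zero] at h0
    simp [wpProd, h0]
  | succ j ih =>
    rw [wpProd_succ, wpProd_succ, ih, wpLower_add_one, Nat.cast_succ]
    ring

/-- The factor relating `Ω(a; b, c, d, e)` to `Ω(a + 1; b, c, d, e)`. -/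
noncomputable def accelFactor (a b c d e : k⟦X⟧) : k⟦X⟧ :=
  -(pairProd a b c d e * ((excess a b c d e)⁻¹ * (wpLower a b c d e 0)⁻¹))

lemma accel_step {a b c d e : k⟦X⟧} (hE : constantCoeff (excess a b c d e) ≠ 0) (hL : ∀ i : ℕ,
    constantCoeff (wpLower a b c d e i) ≠ 0) (j : ℕ) :
    (a + 2 * j) * wpProd a b c d e j =
      accelFactor a b c d e * ((a + 1 + 2 * j) * wpProd (a + 1) b c d e j) +
      certPoly a b c d e j * wpProd a b c d e j * (excess a b c d e)⁻¹ -
      certPoly a b c d e (j + 1 : ℕ) * wpProd a b c d e (j + 1) * (excess a b c d e)⁻¹ := by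
  have hexcess := PowerSeries.mul_inv_cancel _ hE
  have hlower := PowerSeries.mul_inv_cancel _ (hL j)
  have hlower₀ := PowerSeries.mul_inv_cancel _ (hL 0)
  have hcert := quartic_certificate a b c d e j
  rw [wpProd_add_one hL, wpProd_succ, accelFactor]
  push_cast at hlower₀ ⊢
  generalize wpLower a b c d e (j : k⟦X⟧) = L at *
  generalize wpLower a b c d e 0 = L₀ at *
  generalize excess a b c d e = E at *
  generalize pairProd a b c d e = Q at *
  generalize wpProd a b c d e j = V
  linear_combination (-V * L⁻¹ * E⁻¹) * hcert -
    ((a + 2 * j) * V * L * L⁻¹) * hexcess - ((a + 2 * j) * V) * hlower +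
    (certPoly a b c d e j * V * E⁻¹) * hlower +
    (Q * E⁻¹ * (a + 1 + 2 * j) * V * L⁻¹) * hlower₀

theorem accel_sum {a b c d e : k⟦X⟧}
    (hE : ∀ n : ℕ, constantCoeff (excess (a + (n : k⟦X⟧)) b c d e) ≠ 0)
    (hL : ∀ i : ℕ, constantCoeff (wpLower a b c d e i) ≠ 0) (N K : ℕ) :
    ∑ j ∈ range K, (a + 2 * j) * wpProd a b c d e j =
      (∏ i ∈ range N, accelFactor (a + (i : k⟦X⟧)) b c d e) *
        ∑ j ∈ range K, (a + N + 2 * j) * wpProd (a + (N : k⟦X⟧)) b c d e j +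
      ∑ n ∈ range N, (∏ i ∈ range n, accelFactor (a + (i : k⟦X⟧)) b c d e) *
        (certPoly (a + (n : k⟦X⟧)) b c d e 0 * (excess (a + (n : k⟦X⟧)) b c d e)⁻¹ -
          certPoly (a + (n : k⟦X⟧)) b c d e K * wpProd (a + (n : k⟦X⟧)) b c d e K *
            (excess (a + (n : k⟦X⟧)) b c d e)⁻¹) := by
  have hLn (n i : ℕ) : constantCoeff (wpLower (a + (n : k⟦X⟧)) b c d e i) ≠ 0 := by
    have hshift : wpLower (a + (n : k⟦X⟧)) b c d e i = wpLower a b c d e ((n + i : ℕ) : k⟦X⟧) := by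
      unfold wpLower quartic
      push_cast
      ring
    exact hshift ▸ hL (n + i)
  have h := sum_range_eq_of_contiguous
    (F := fun n j => (a + n + 2 * j) * wpProd (a + (n : k⟦X⟧)) b c d e j)
    (G := fun n j => certPoly (a + (n : k⟦X⟧)) b c d e j * wpProd (a + (n : k⟦X⟧)) b c d e j *
      (excess (a + (n : k⟦X⟧)) b c d e)⁻¹) (r := fun n => accelFactor (a + (n : k⟦X⟧)) b c d e)
    (fun n j => by
      rw [Nat.cast_succ, ← add_assoc]
      exact accel_step (hE n) (hLn n) j) N K
  simpa only [wpProd_zero, Nat.cast_zero, add_zero, mul_one] using h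

/-- The product `(1 + a - b + x) (1 + a - c + x) (1 + a - d + x)`. -/
def cubicLower {R : Type*} [CommRing R] (a b c d x : R) : R :=
  (1 + a - b + x) * (1 + a - c + x) * (1 + a - d + x)

lemma wpLower_self {R : Type*} [CommRing R] (a b c d x : R) :
    wpLower a a b c d x = (1 + x) * cubicLower a b c d x := by
  unfold wpLower quartic cubicLower
  ring

lemma cubicLower_add_one {R : Type*} [CommRing R] (a b c d x : R) :
    cubicLower (a + 1) b c d x = cubicLower a b c d (x + 1) := by
  unfold cubicLower
  ring

lemma dougall_certificate {R : Type*} [CommRing R] (a b c d x : R) :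
    (a + 2 * x) * (1 + a - (b + c + d)) * cubicLower a b c d x =
      (a + 1 + 2 * x) * (a + x) * ((1 + a - b - c) * (1 + a - b - d) * (1 + a - c - d)) +
        x * (x + 1 + 2 * a - (b + c + d)) * cubicLower a b c d x -
        (x + 2 + 2 * a - (b + c + d)) * quartic a b c d x := by
  unfold cubicLower quartic
  ring

/-- The factor relating the Dougall series `Ω(a; a, b, c, d)` to `Ω(a + 1; a + 1, b, c, d)`. -/
noncomputable def dougallFactor (a b c d : k⟦X⟧) : k⟦X⟧ :=
  a * ((1 + a - b - c) * (1 + a - b - d) * (1 + a - c - d)) *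
    ((1 + a - (b + c + d))⁻¹ * (cubicLower a b c d 0)⁻¹)

lemma mul_wpProd_add_one_self {a b c d : k⟦X⟧}
    (h : ∀ i : ℕ, constantCoeff (wpLower a a b c d i) ≠ 0) (j : ℕ) :
    a * wpProd (a + 1) (a + 1) b c d j = wpProd a a b c d j *
      ((a + j) * (cubicLower a b c d 0 * (cubicLower a b c d j)⁻¹)) := by
  induction j with
  | zero =>
    have h0 := PowerSeries.mul_inv_cancel (cubicLower a b c d 0) (by simpa [wpLower_self] using h 0)
    simp [wpProd, h0]
  | succ j ih =>
    rw [wpProd_succ, wpProd_succ, ← mul_assoc, ih, wpLower_self, wpLower_self, cubicLower_add_one,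
      PowerSeries.mul_inv_rev, PowerSeries.mul_inv_rev, Nat.cast_succ]
    unfold quartic
    ring

lemma dougall_step {a b c d : k⟦X⟧} (hE : constantCoeff (1 + a - (b + c + d)) ≠ 0)
    (hL : ∀ i : ℕ, constantCoeff (wpLower a a b c d i) ≠ 0) (j : ℕ) :
    (a + 2 * j) * wpProd a a b c d j =
      dougallFactor a b c d * ((a + 1 + 2 * j) * wpProd (a + 1) (a + 1) b c d j) +
      j * (j + 1 + 2 * a - (b + c + d)) * wpProd a a b c d j * (1 + a - (b + c + d))⁻¹ -
      (j + 1 : ℕ) * ((j + 1 : ℕ) + 1 + 2 * a - (b + c + d)) * wpProd a a b c d (j + 1) *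
        (1 + a - (b + c + d))⁻¹ := by
  have hL' (i : ℕ) :
      constantCoeff (1 + (i : k⟦X⟧)) * constantCoeff (cubicLower a b c d i) ≠ 0 := by
    simpa only [wpLower_self, map_mul] using hL i
  have hexcess := PowerSeries.mul_inv_cancel _ hE
  have hlower := PowerSeries.mul_inv_cancel _ (right_ne_zero_of_mul (hL' j))
  have hlower₀ := PowerSeries.mul_inv_cancel _ (right_ne_zero_of_mul (hL' 0))
  have hj := PowerSeries.mul_inv_cancel _ (left_ne_zero_of_mul (hL' j))
  have hcert := dougall_certificate a b c d j
  have hshift := mul_wpProd_add_one_self hL j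
  rw [wpProd_succ, wpLower_self, PowerSeries.mul_inv_rev, dougallFactor]
  push_cast at hlower₀ ⊢
  generalize cubicLower a b c d (j : k⟦X⟧) = L at *
  generalize cubicLower a b c d 0 = L₀ at *
  generalize (1 + a - b - c) * (1 + a - b - d) * (1 + a - c - d) = Q at *
  generalize wpProd a a b c d j = V at *
  generalize wpProd (a + 1) (a + 1) b c d j = V' at *
  generalize quartic a b c d (j : k⟦X⟧) = U at *
  linear_combination (V * L⁻¹ * (1 + a - (b + c + d))⁻¹) * hcert -
    ((a + 2 * j) * V * L * L⁻¹) * hexcess -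
    ((a + 2 * j) * V - j * (j + 1 + 2 * a - (b + c + d)) * V * (1 + a - (b + c + d))⁻¹) * hlower +
    ((j + 2 + 2 * a - (b + c + d)) * V * U * L⁻¹ * (1 + a - (b + c + d))⁻¹) * hj -
    (Q * (1 + a - (b + c + d))⁻¹ * (L₀⁻¹ * (a + 1 + 2 * j))) * hshift -
    (Q * (1 + a - (b + c + d))⁻¹ * ((a + 1 + 2 * j) * V * (a + j) * L⁻¹)) * hlower₀

/-- Dougall's summation of a very-well-poised `₅F₄` at `1`, in finite form. -/
theorem dougall_sum {a b c d : k⟦X⟧}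
    (hE : ∀ n : ℕ, constantCoeff (1 + (a + (n : k⟦X⟧)) - (b + c + d)) ≠ 0)
    (hL : ∀ n i : ℕ, constantCoeff
      (wpLower (a + (n : k⟦X⟧)) (a + (n : k⟦X⟧)) b c d i) ≠ 0) (N K : ℕ) :
    ∑ j ∈ range K, (a + 2 * j) * wpProd a a b c d j =
      (∏ i ∈ range N, dougallFactor (a + (i : k⟦X⟧)) b c d) *
        ∑ j ∈ range K, (a + N + 2 * j) * wpProd (a + (N : k⟦X⟧)) (a + (N : k⟦X⟧)) b c d j -
      ∑ n ∈ range N, (∏ i ∈ range n, dougallFactor (a + (i : k⟦X⟧)) b c d) *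
        (K * (K + 1 + 2 * (a + n) - (b + c + d)) *
          wpProd (a + (n : k⟦X⟧)) (a + (n : k⟦X⟧)) b c d K *
            (1 + (a + (n : k⟦X⟧)) - (b + c + d))⁻¹) := by
  have h := sum_range_eq_of_contiguous
    (F := fun n j => (a + n + 2 * j) * wpProd (a + (n : k⟦X⟧)) (a + (n : k⟦X⟧)) b c d j)
    (G := fun n j => j * (j + 1 + 2 * (a + n) - (b + c + d)) *
      wpProd (a + (n : k⟦X⟧)) (a + (n : k⟦X⟧)) b c d j *
        (1 + (a + (n : k⟦X⟧)) - (b + c + d))⁻¹)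
    (r := fun n => dougallFactor (a + (n : k⟦X⟧)) b c d)
    (fun n j => by
      rw [Nat.cast_succ, ← add_assoc]
      exact dougall_step (hE n) (hL n) j) N K
  simp only [Nat.cast_zero, add_zero, zero_mul, zero_sub, mul_neg, sum_neg_distrib,
    ← sub_eq_add_neg] at h
  exact h

end WellPoised

section LimitExchange

lemma exists_tendsto_of_eq_add_add {S B τ : ℕ → ℝ} {A E : ℕ → ℕ → ℝ}
    (h : ∀ N K, S K = A N K + B N + E N K) (hA : ∀ N K, |A N K| ≤ τ N)
    (hτ : Tendsto τ atTop (𝓝 0)) (hE : ∀ N, Tendsto (E N) atTop (𝓝 0)) :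
    ∃ L, Tendsto S atTop (𝓝 L) ∧ Tendsto B atTop (𝓝 L) := by
  have hS : CauchySeq S := by
    refine Metric.cauchySeq_iff'.2 fun δ hδ => ?_
    obtain ⟨N, hτN⟩ := (hτ.eventually_lt_const (by positivity : 0 < δ / 4)).exists
    obtain ⟨K₀, hK₀⟩ := Metric.tendsto_atTop.1 (hE N) (δ / 4) (by positivity)
    refine ⟨K₀, fun K hK => ?_⟩
    have hEK := hK₀ K hK
    have hEK₀ := hK₀ K₀ le_rfl
    have hAK := hA N K
    have hAK₀ := hA N K₀
    rw [Real.dist_eq] at *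
    rw [h N K, h N K₀, abs_lt]
    rw [sub_zero, abs_lt] at hEK hEK₀
    rw [abs_le] at hAK hAK₀
    constructor <;> linarith [hEK.1, hEK.2, hEK₀.1, hEK₀.2, hAK.1, hAK.2, hAK₀.1, hAK₀.2]
  obtain ⟨L, hL⟩ := cauchySeq_tendsto_of_complete hS
  refine ⟨L, hL, tendsto_iff_dist_tendsto_zero.2
    (squeeze_zero (fun _ => dist_nonneg) (fun N => ?_) hτ)⟩
  have hlim : Tendsto (fun K => |S K - E N K - B N|) atTop (𝓝 |L - 0 - B N|) :=
    ((hL.sub (hE N)).sub_const _).abs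
  rw [dist_comm, Real.dist_eq, ← sub_zero L]
  refine le_of_tendsto hlim (.of_forall fun K => ?_)
  rw [h N K]
  simpa using hA N K

lemma sum_inv_mul_succ_le (K : ℕ) :
    ∑ j ∈ range K, 1 / (((j : ℝ) + 2) * ((j : ℝ) + 3)) ≤ 1 / 2 := by
  have h : ∑ j ∈ range K, 1 / (((j : ℝ) + 2) * ((j : ℝ) + 3)) = 1 / 2 - 1 / ((K : ℝ) + 2) := by
    induction K with
    | zero => simp
    | succ K ih =>
      rw [sum_range_succ, ih]
      push_cast
      field_simp
      ring
  rw [h]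
  linarith [show (0 : ℝ) ≤ 1 / ((K : ℝ) + 2) by positivity]

variable {ρ : ℝ≥0} {N : ℕ}

lemma truncSeminorm_natCast_le (n : ℕ) : truncSeminorm ρ N (n : ℝ⟦X⟧) ≤ n := by
  simpa using truncSeminorm_C_le (ρ := ρ) (N := N) n

lemma tendsto_coeff_quadratic_mul (hρ : 0 < ρ) {V : ℕ → ℝ⟦X⟧} {c : ℝ} (hV : ∀ K : ℕ,
    truncSeminorm ρ N (V K) ≤ c / (((K : ℝ) + 1) * (K + 2) * (K + 3))) (f g h : ℝ⟦X⟧) {i : ℕ}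
    (hi : i < N) :
    Tendsto (fun K : ℕ => coeff i ((f * (K : ℝ⟦X⟧) ^ 2 + g * (K : ℝ⟦X⟧) + h) * V K)) atTop
      (𝓝 0) := by
  set q := truncSeminorm ρ N
  refine tendsto_coeff_of_tendsto_truncSeminorm hρ (squeeze_zero (fun _ => apply_nonneg _ _)
    (fun K => ?_) ((tendsto_one_div_add_atTop_nhds_zero_nat (𝕜 := ℝ)).const_mul
      ((q f + q g + q h) * c) |>.trans (by simp))) hi
  have hK : q (K : ℝ⟦X⟧) ≤ K := truncSeminorm_natCast_le K
  have hf : 0 ≤ q f := apply_nonneg _ _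
  have hg : 0 ≤ q g := apply_nonneg _ _
  have hh : 0 ≤ q h := apply_nonneg _ _
  have : 0 ≤ c := by
    have h0 := (apply_nonneg q (V 0)).trans (hV 0)
    rwa [Nat.cast_zero, le_div_iff₀ (by norm_num), zero_mul] at h0
  have hquad : q (f * (K : ℝ⟦X⟧) ^ 2 + g * (K : ℝ⟦X⟧) + h) ≤
      (q f + q g + q h) * ((K : ℝ) + 1) ^ 2 :=
    calc q (f * (K : ℝ⟦X⟧) ^ 2 + g * (K : ℝ⟦X⟧) + h) ≤ q f * (K * K) + q g * K + q h := by
          rw [pow_two]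
          refine (map_add_le_add _ _ _).trans (add_le_add_left ((map_add_le_add _ _ _).trans ?_) _)
          exact add_le_add (truncSeminorm_mul_le_of_le le_rfl (truncSeminorm_mul_le_of_le hK hK))
            (truncSeminorm_mul_le_of_le le_rfl hK)
      _ ≤ _ := by
        have hK0 : (0 : ℝ) ≤ K := K.cast_nonneg
        nlinarith [mul_nonneg hf hK0, mul_nonneg hg hK0, mul_nonneg hh hK0,
          mul_nonneg hg (mul_nonneg hK0 hK0), mul_nonneg hh (mul_nonneg hK0 hK0)]
  refine (truncSeminorm_mul_le_of_le hquad (hV K)).trans ?_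
  rw [mul_div_assoc', mul_one_div, div_le_div_iff₀ (by positivity) (by positivity)]
  have hK : ((K : ℝ) + 1) ^ 2 * (K + 1) ≤ (K + 1) * (K + 2) * (K + 3) := by
    nlinarith [K.cast_nonneg (α := ℝ)]
  calc _ = (q f + q g + q h) * c * (((K : ℝ) + 1) ^ 2 * (K + 1)) := by ring
    _ ≤ _ := by gcongr

end LimitExchange

section Radius

/-- A radius with `12 * rad = 1 / 100`, for linear factors with slope at most `12`. -/
noncomputable def rad : ℝ≥0 := 1 / 1200

lemma rad_pos : 0 < rad := by norm_num [rad]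

lemma abs_mul_rad_le {α : ℝ} (hα : |α| ≤ 12) : |α| * rad ≤ 1 / 100 := by
  simp only [rad, NNReal.coe_div, NNReal.coe_one, NNReal.coe_ofNat]
  linarith

variable {N : ℕ} {m α m' α' c : ℝ}

lemma truncSeminorm_rad_lin_le (hm : 0 ≤ m) (hα : |α| ≤ 12) :
    truncSeminorm rad N (lin m α) ≤ m + 1 / 100 := by
  have h := truncSeminorm_lin_le (ρ := rad) (N := N) m α
  rw [abs_of_nonneg hm] at h
  linarith [abs_mul_rad_le hα]

lemma truncSeminorm_rad_lin_mul_inv_le (hm : 0 ≤ m) (hα : |α| ≤ 12) (hα' : |α'| ≤ 12)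
    (hm' : 1 / 100 < m') (h : (m + 1 / 100) / (m' - 1 / 100) ≤ c) :
    truncSeminorm rad N (lin m α * (lin m' α')⁻¹) ≤ c := by
  have hα₁ := abs_mul_rad_le hα
  have hα₁' := abs_mul_rad_le hα'
  rw [div_le_iff₀ (by linarith)] at h
  have : 0 ≤ c := by
    by_contra! hc
    nlinarith
  refine truncSeminorm_lin_mul_inv_lin_le (by linarith) ?_
  rw [abs_of_nonneg hm]
  nlinarith

end Radius

section Family

/-- The parameter `a` of the family `Ω(a; b, c, d, e)` with two real slopes `u, w` whose accelerated
series involve the central binomial coefficients. -/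
noncomputable def paramA : ℝ⟦X⟧ := lin (5 / 2) 2

/-- The parameter `b` of the family; see `paramA`. -/
noncomputable def paramB (u : ℝ) : ℝ⟦X⟧ := lin 1 (1 + u)

/-- The parameter `c` of the family; see `paramA`. -/
noncomputable def paramC (u : ℝ) : ℝ⟦X⟧ := lin 1 (1 - u)

/-- The parameter `d` of the family; see `paramA`. -/
noncomputable def paramD (w : ℝ) : ℝ⟦X⟧ := lin (3 / 2) (w - 1)

/-- The parameter `e` of the family; see `paramA`. -/
noncomputable def paramE (w : ℝ) : ℝ⟦X⟧ := lin (3 / 2) (-w - 1)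

/-- The products `wpProd` of the family after `n` shifts. -/
noncomputable def familyProd (u w : ℝ) (n : ℕ) : ℕ → ℝ⟦X⟧ :=
  wpProd (paramA + n) (paramB u) (paramC u) (paramD w) (paramE w)

/-- The terms `(a + 2j) ∏ ⋯` of the family after `n` shifts. -/
noncomputable def familyTerm (u w : ℝ) (n j : ℕ) : ℝ⟦X⟧ :=
  (paramA + n + 2 * j) * familyProd u w n j

/-- The acceleration factor of the family at the `n`-th shift. -/
noncomputable def familyFactor (u w : ℝ) (n : ℕ) : ℝ⟦X⟧ :=
  accelFactor (paramA + n) (paramB u) (paramC u) (paramD w) (paramE w)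

/-- The excess factor of the family at the `n`-th shift. -/
noncomputable def familyExcess (u w : ℝ) (n : ℕ) : ℝ⟦X⟧ :=
  excess (paramA + n) (paramB u) (paramC u) (paramD w) (paramE w)

/-- The certificate polynomial of the family at the `n`-th shift. -/
noncomputable def familyCert (u w : ℝ) (n : ℕ) : ℝ⟦X⟧ → ℝ⟦X⟧ :=
  certPoly (paramA + n) (paramB u) (paramC u) (paramD w) (paramE w)

lemma lin_add_lin (m α m' α' : ℝ) : lin m α + lin m' α' = lin (m + m') (α + α') := by
  simp only [lin, map_add]
  ring

lemma lin_sub_lin (m α m' α' : ℝ) : lin m α - lin m' α' = lin (m - m') (α - α') := by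
  simp only [lin, map_sub]
  ring

lemma one_eq_lin : (1 : ℝ⟦X⟧) = lin 1 0 := by simp [lin]

lemma natCast_eq_lin (n : ℕ) : (n : ℝ⟦X⟧) = lin n 0 := by simp [lin]

lemma family_upper (u w : ℝ) (i : ℕ) :
    quartic (paramB u) (paramC u) (paramD w) (paramE w) i =
      lin (i + 1) (1 + u) * lin (i + 1) (1 - u) *
        lin (i + 3 / 2) (w - 1) * lin (i + 3 / 2) (-w - 1) := by
  simp only [quartic, paramB, paramC, paramD, paramE, natCast_eq_lin, lin_add_lin]
  ring_nf

lemma family_lower (u w : ℝ) (n i : ℕ) :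
    wpLower (paramA + (n : ℝ⟦X⟧)) (paramB u) (paramC u) (paramD w) (paramE w) i =
      lin (n + i + 5 / 2) (1 - u) * lin (n + i + 5 / 2) (1 + u) *
        lin (n + i + 2) (3 - w) * lin (n + i + 2) (3 + w) := by
  simp only [wpLower, quartic, paramA, paramB, paramC, paramD, paramE, natCast_eq_lin, one_eq_lin,
    lin_add_lin, lin_sub_lin]
  ring_nf

lemma family_pairProd (u w : ℝ) (n : ℕ) :
    pairProd (paramA + (n : ℝ⟦X⟧)) (paramB u) (paramC u) (paramD w) (paramE w) =
      lin (n + 3 / 2) 0 * lin (n + 1) (2 - u - w) * lin (n + 1) (2 - u + w) *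
        lin (n + 1) (2 + u - w) * lin (n + 1) (2 + u + w) * lin (n + 1 / 2) 4 := by
  simp only [pairProd, paramA, paramB, paramC, paramD, paramE, natCast_eq_lin, one_eq_lin,
    lin_add_lin, lin_sub_lin]
  ring_nf

lemma familyExcess_eq (u w : ℝ) (n : ℕ) :
    familyExcess u w n = lin (2 * n + 1) 4 * lin (2 * n + 2) 4 := by
  have h2 : (2 : ℝ⟦X⟧) = lin 2 0 := by simpa using natCast_eq_lin 2
  simp only [familyExcess, excess, two_mul]
  simp only [paramA, paramB, paramC, paramD, paramE, natCast_eq_lin, one_eq_lin, h2, lin_add_lin,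
    lin_sub_lin]
  ring_nf

lemma constantCoeff_familyExcess_ne_zero (u w : ℝ) (n : ℕ) :
    constantCoeff (familyExcess u w n) ≠ 0 := by
  rw [familyExcess_eq, map_mul, constantCoeff_lin, constantCoeff_lin]
  positivity

lemma constantCoeff_family_lower_ne_zero (u w : ℝ) (n i : ℕ) : constantCoeff
    (wpLower (paramA + (n : ℝ⟦X⟧)) (paramB u) (paramC u) (paramD w) (paramE w) i) ≠ 0 := by
  simp only [family_lower, map_mul, constantCoeff_lin]
  positivity

lemma familyFactor_eq (u w : ℝ) (n : ℕ) : familyFactor u w n =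
    -((lin (n + 3 / 2) 0 * (lin (n + 5 / 2) (1 - u))⁻¹) *
      (lin (n + 1) (2 - u - w) * (lin (n + 5 / 2) (1 + u))⁻¹) *
      (lin (n + 1) (2 - u + w) * (lin (n + 2) (3 - w))⁻¹) *
      (lin (n + 1) (2 + u - w) * (lin (n + 2) (3 + w))⁻¹) *
      (lin (n + 1) (2 + u + w) * (lin (2 * n + 2) 4)⁻¹) *
      (lin (n + 1 / 2) 4 * (lin (2 * n + 1) 4)⁻¹)) := by
  have hlower := family_lower u w n 0
  simp only [Nat.cast_zero, add_zero] at hlower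
  rw [familyFactor, accelFactor, family_pairProd, hlower, ← familyExcess, familyExcess_eq]
  simp only [PowerSeries.mul_inv_rev]
  ring

lemma familyProd_succ (u w : ℝ) (n j : ℕ) : familyProd u w n (j + 1) = familyProd u w n j *
    ((lin (j + 1) (1 + u) * (lin (n + j + 2) (3 - w))⁻¹) *
      (lin (j + 1) (1 - u) * (lin (n + j + 2) (3 + w))⁻¹) *
      (lin (j + 3 / 2) (w - 1) * (lin (n + j + 5 / 2) (1 - u))⁻¹) *
      (lin (j + 3 / 2) (-w - 1) * (lin (n + j + 5 / 2) (1 + u))⁻¹)) := by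
  rw [familyProd, wpProd_succ, family_upper, family_lower]
  simp only [PowerSeries.mul_inv_rev]
  ring

variable {N : ℕ} {u w : ℝ}

lemma truncSeminorm_familyFactor_le (hu : |u| ≤ 7) (hw : |w| ≤ 3) (n : ℕ) :
    truncSeminorm rad N (familyFactor u w n) ≤ 1 / 3 := by
  obtain ⟨hu, hu'⟩ := abs_le.1 hu
  obtain ⟨hw, hw'⟩ := abs_le.1 hw
  have : (0 : ℝ) ≤ n := n.cast_nonneg
  have hslopes : |1 - u| ≤ 12 ∧ |1 + u| ≤ 12 ∧ |3 - w| ≤ 12 ∧ |3 + w| ≤ 12 ∧ |2 - u - w| ≤ 12 ∧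
      |2 - u + w| ≤ 12 ∧ |2 + u - w| ≤ 12 ∧ |2 + u + w| ≤ 12 := by
    simp only [abs_le]
    refine ⟨?_, ?_, ?_, ?_, ?_, ?_, ?_, ?_⟩ <;> constructor <;> linarith
  obtain ⟨h₁, h₂, h₃, h₄, h₅, h₆, h₇, h₈⟩ := hslopes
  have hratio {m α m' α' c : ℝ} (hα : |α| ≤ 12) (hα' : |α'| ≤ 12) (hm : 0 ≤ m)
      (hm' : 1 / 100 < m') (h : m + 1 / 100 ≤ c * (m' - 1 / 100)) :
      truncSeminorm rad N (lin m α * (lin m' α')⁻¹) ≤ c :=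
    truncSeminorm_rad_lin_mul_inv_le hm hα hα' hm' ((div_le_iff₀ (by linarith)).2 h)
  rw [familyFactor_eq, map_neg_eq_map]
  calc _ ≤ (1 : ℝ) * 1 * 1 * 1 * (11 / 20) * (11 / 20) :=
        truncSeminorm_mul_le_of_le (truncSeminorm_mul_le_of_le (truncSeminorm_mul_le_of_le
          (truncSeminorm_mul_le_of_le (truncSeminorm_mul_le_of_le
            (hratio (by norm_num) h₁ (by linarith) (by linarith) (by linarith))
            (hratio h₅ h₂ (by linarith) (by linarith) (by linarith)))
            (hratio h₆ h₃ (by linarith) (by linarith) (by linarith)))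
            (hratio h₇ h₄ (by linarith) (by linarith) (by linarith)))
            (hratio h₈ (by norm_num) (by linarith) (by linarith) (by linarith)))
            (hratio (by norm_num) (by norm_num) (by linarith) (by linarith) (by linarith))
    _ ≤ 1 / 3 := by norm_num

lemma truncSeminorm_familyProd_le (hu : |u| ≤ 7) (hw : |w| ≤ 3) (n j : ℕ) :
    truncSeminorm rad N (familyProd u w n j) ≤ 6 / (((j : ℝ) + 1) * (j + 2) * (j + 3)) := by
  induction j with
  | zero =>
    norm_num [familyProd, wpProd_zero]
    exact truncSeminorm_one_le
  | succ j ih =>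
    obtain ⟨hu, hu'⟩ := abs_le.1 hu
    obtain ⟨hw, hw'⟩ := abs_le.1 hw
    have : (j : ℝ) ≤ n + j := by linarith [n.cast_nonneg (α := ℝ)]
    have hratio₁ {α α' : ℝ} (hα : -12 ≤ α ∧ α ≤ 12) (hα' : -12 ≤ α' ∧ α' ≤ 12) :
        truncSeminorm rad N (lin (j + 1) α * (lin (n + j + 2) α')⁻¹) ≤
          (j + 101 / 100) / (j + 199 / 100) :=
      truncSeminorm_rad_lin_mul_inv_le (by positivity) (abs_le.2 hα) (abs_le.2 hα') (by linarith)
        (div_le_div₀ (by positivity) (by linarith) (by positivity) (by linarith))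
    have hratio₂ {α α' : ℝ} (hα : -12 ≤ α ∧ α ≤ 12) (hα' : -12 ≤ α' ∧ α' ≤ 12) :
        truncSeminorm rad N (lin (j + 3 / 2) α * (lin (n + j + 5 / 2) α')⁻¹) ≤
          (j + 151 / 100) / (j + 249 / 100) :=
      truncSeminorm_rad_lin_mul_inv_le (by positivity) (abs_le.2 hα) (abs_le.2 hα') (by linarith)
        (div_le_div₀ (by positivity) (by linarith) (by positivity) (by linarith))
    rw [familyProd_succ]
    calc _ ≤ 6 / (((j : ℝ) + 1) * (j + 2) * (j + 3)) * _ :=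
          truncSeminorm_mul_le_of_le ih <| truncSeminorm_mul_le_of_le
            (truncSeminorm_mul_le_of_le (truncSeminorm_mul_le_of_le
              (hratio₁ (by constructor <;> linarith) (by constructor <;> linarith))
              (hratio₁ (by constructor <;> linarith) (by constructor <;> linarith)))
              (hratio₂ (by constructor <;> linarith) (by constructor <;> linarith)))
              (hratio₂ (by constructor <;> linarith) (by constructor <;> linarith))
      _ ≤ 6 / (((j : ℝ) + 1) * (j + 2) * (j + 3)) * ((j + 1) / (j + 4)) := by
        gcongr
        rw [← mul_div_mul_comm, ← mul_div_mul_comm, ← mul_div_mul_comm,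
          div_le_div_iff₀ (by positivity) (by positivity), ← sub_nonneg]
        ring_nf
        positivity
      _ = _ := by
        push_cast
        field_simp
        ring

lemma truncSeminorm_sum_familyTerm_le (hu : |u| ≤ 7) (hw : |w| ≤ 3) (n K : ℕ) :
    truncSeminorm rad N (∑ j ∈ range K, familyTerm u w n j) ≤ 9 * ((n : ℝ) + 1) := by
  have : (0 : ℝ) ≤ n := n.cast_nonneg
  have hterm (j : ℕ) : truncSeminorm rad N (familyTerm u w n j) ≤
      18 * ((n : ℝ) + 1) * (1 / (((j : ℝ) + 2) * (j + 3))) := by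
    have : (0 : ℝ) ≤ j := j.cast_nonneg
    have hlin : paramA + (n : ℝ⟦X⟧) + 2 * j = lin (n + 2 * j + 5 / 2) 2 := by
      simp only [two_mul, paramA, natCast_eq_lin, lin_add_lin]
      ring_nf
    calc truncSeminorm rad N (familyTerm u w n j)
        ≤ 3 * ((n : ℝ) + 1) * (j + 1) * (6 / (((j : ℝ) + 1) * (j + 2) * (j + 3))) := by
          rw [familyTerm, hlin]
          refine truncSeminorm_mul_le_of_le ((truncSeminorm_rad_lin_le (by positivity)
            (by norm_num)).trans ?_) (truncSeminorm_familyProd_le hu hw n j)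
          nlinarith
      _ = _ := by
        field_simp
        ring
  calc _ ≤ ∑ j ∈ range K, 18 * ((n : ℝ) + 1) * (1 / (((j : ℝ) + 2) * (j + 3))) :=
        (truncSeminorm_sum_le _ _).trans (sum_le_sum fun j _ => hterm j)
    _ ≤ 18 * ((n : ℝ) + 1) * (1 / 2) := by
      rw [← mul_sum]
      gcongr
      exact sum_inv_mul_succ_le K
    _ = 9 * ((n : ℝ) + 1) := by ring

lemma truncSeminorm_prod_familyFactor_le (hu : |u| ≤ 7) (hw : |w| ≤ 3) (n : ℕ) :
    truncSeminorm rad N (∏ i ∈ range n, familyFactor u w i) ≤ (1 / 3) ^ n :=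
  (truncSeminorm_prod_le _ _).trans <| (prod_le_prod (fun _ _ => apply_nonneg _ _)
    fun i _ => truncSeminorm_familyFactor_le hu hw i).trans_eq (by simp)

lemma sum_familyTerm (u w : ℝ) (N K : ℕ) : ∑ j ∈ range K, familyTerm u w 0 j =
    (∏ i ∈ range N, familyFactor u w i) * ∑ j ∈ range K, familyTerm u w N j +
      ∑ n ∈ range N, (∏ i ∈ range n, familyFactor u w i) *
        (familyCert u w n 0 * (familyExcess u w n)⁻¹ -
          familyCert u w n K * familyProd u w n K * (familyExcess u w n)⁻¹) := by
  have h := accel_sum (constantCoeff_familyExcess_ne_zero u w)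
    (fun i => by simpa using constantCoeff_family_lower_ne_zero u w 0 i) N K
  simpa only [familyTerm, familyProd, familyFactor, familyCert, familyExcess, Nat.cast_zero,
    add_zero] using h

lemma tendsto_coeff_familyCert_mul_familyProd (hu : |u| ≤ 7) (hw : |w| ≤ 3) (g : ℝ⟦X⟧) (n m : ℕ) :
    Tendsto (fun K : ℕ => coeff m (g * (familyCert u w n K * familyProd u w n K))) atTop
      (𝓝 0) := by
  obtain ⟨p, q, hp⟩ : ∃ p q : ℝ⟦X⟧, ∀ x, familyCert u w n x = p * x ^ 2 + q * x +
      familyCert u w n 0 := ⟨_, _, certPoly_eq_quadratic _ _ _ _ _⟩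
  have h := tendsto_coeff_quadratic_mul (N := m + 1) rad_pos (truncSeminorm_familyProd_le hu hw n)
    (g * p) (g * q) (g * familyCert u w n 0) m.lt_succ_self
  refine h.congr fun K => ?_
  rw [hp K]
  ring_nf

theorem exists_tendsto_sum_familyTerm (hu : |u| ≤ 7) (hw : |w| ≤ 3) (g : ℝ⟦X⟧) (m : ℕ) :
    ∃ L, Tendsto (fun K => ∑ j ∈ range K, coeff m (g * familyTerm u w 0 j)) atTop (𝓝 L) ∧
      Tendsto (fun N => ∑ n ∈ range N, coeff m (g * ((∏ i ∈ range n, familyFactor u w i) *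
        (familyCert u w n 0 * (familyExcess u w n)⁻¹)))) atTop (𝓝 L) := by
  set q := truncSeminorm rad (m + 1)
  set P : ℕ → ℝ⟦X⟧ := fun n => ∏ i ∈ range n, familyFactor u w i
  have hrad : (0 : ℝ) < rad ^ m := pow_pos (NNReal.coe_pos.2 rad_pos) m
  refine exists_tendsto_of_eq_add_add
    (A := fun N K => coeff m (g * (P N * ∑ j ∈ range K, familyTerm u w N j)))
    (E := fun N K => -∑ n ∈ range N, coeff m (g * P n * (familyExcess u w n)⁻¹ *
      (familyCert u w n K * familyProd u w n K)))
    (τ := fun N => q g * 9 / rad ^ m * ((N + 1) * (1 / 3) ^ N)) (fun N K => ?_) (fun N K => ?_)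
    ?_ fun N => ?_
  · simp only [← map_sum, ← mul_sum, ← map_add, ← sub_eq_add_neg, ← map_sub]
    rw [sum_familyTerm u w N K, mul_add, add_sub_assoc, mul_sum _ _ g, mul_sum _ _ g,
      ← sum_sub_distrib]
    congr 2
    refine sum_congr rfl fun n _ => ?_
    ring
  · rw [div_mul_eq_mul_div, le_div_iff₀ hrad]
    refine (abs_coeff_mul_pow_le _ m.lt_succ_self).trans ((truncSeminorm_mul_le_of_le le_rfl
      (truncSeminorm_mul_le_of_le (truncSeminorm_prod_familyFactor_le hu hw N)
        (truncSeminorm_sum_familyTerm_le hu hw N K))).trans_eq (by ring))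
  · have hpow : |(1 / 3 : ℝ)| < 1 := by norm_num [abs_of_pos]
    have h := (tendsto_self_mul_const_pow_of_abs_lt_one hpow).add
      (tendsto_pow_atTop_nhds_zero_of_abs_lt_one hpow)
    simpa [add_mul] using h.const_mul (q g * 9 / rad ^ m)
  · rw [← neg_zero, ← sum_const_zero (s := range N)]
    exact (tendsto_finsetSum _ fun n _ =>
      tendsto_coeff_familyCert_mul_familyProd hu hw _ n m).neg

end Family

section FamilyPowerSums

/-- The reciprocal `(-1)^n / binom(2n, n)` of the central binomial coefficient, with alternating
sign. -/
noncomputable def altInvBinom (n : ℕ) : ℝ := (-1) ^ n / n.centralBinom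

lemma altInvBinom_zero : altInvBinom 0 = 1 := by simp [altInvBinom]

lemma altInvBinom_succ (n : ℕ) :
    altInvBinom (n + 1) = -((n : ℝ) + 1) / (2 * (2 * n + 1)) * altInvBinom n := by
  have hn : (n.centralBinom : ℝ) ≠ 0 := Nat.cast_ne_zero.2 n.centralBinom_ne_zero
  have hn' : ((n + 1).centralBinom : ℝ) ≠ 0 := Nat.cast_ne_zero.2 (n + 1).centralBinom_ne_zero
  have h : ((n : ℝ) + 1) * (n + 1).centralBinom = 2 * (2 * n + 1) * n.centralBinom := by
    exact_mod_cast n.succ_mul_centralBinom_succ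
  rw [altInvBinom, altInvBinom, pow_succ]
  field_simp
  linear_combination h

/-- The normalisation of the family for which the power sums of its terms are combinations of
harmonic numbers. -/
noncomputable def familyNorm (u w : ℝ) : ℝ⟦X⟧ :=
  lin (1 / 2) (w - 1) * lin (1 / 2) (-w - 1) *
    ((lin (1 / 2) (1 - u))⁻¹ * (lin (3 / 2) (1 - u))⁻¹) *
    ((lin (1 / 2) (1 + u))⁻¹ * (lin (3 / 2) (1 + u))⁻¹) *
    ((lin 1 (3 - w))⁻¹ * (lin 1 (3 + w))⁻¹)

lemma hasPowerSums_lin_mul_inv_lin {m m' : ℝ} (hm : m ≠ 0) (hm' : m' ≠ 0) (α α' : ℝ) :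
    HasPowerSums (lin m α * (lin m' α')⁻¹) (m / m') fun k => (α / m) ^ k - (α' / m') ^ k :=
  ((HasPowerSums.lin hm α).mul (.inv_lin hm' α')).congr rfl fun _ => (sub_eq_add_neg _ _).symm

lemma hasPowerSums_familyNorm (u w : ℝ) : HasPowerSums (familyNorm u w) (4 / 9) fun k =>
    (2 * (w - 1)) ^ k + (2 * (-w - 1)) ^ k - ((1 - u) ^ k + (1 + u) ^ k) * halfH k 2 -
      ((3 - w) ^ k + (3 + w) ^ k) * H k 1 := by
  have hhalf {α : ℝ} : HasPowerSums ((lin (1 / 2) α)⁻¹ * (lin (3 / 2) α)⁻¹) (4 / 3)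
      fun k => -(α ^ k * halfH k 2) :=
    ((HasPowerSums.inv_lin (by norm_num) α).mul (.inv_lin (by norm_num) α)).congr (by norm_num)
      fun k => by
        have h₁ : α / (1 / 2) = 2 * α := by ring
        have h₂ : α / (3 / 2) = 2 / 3 * α := by ring
        have h₃ : halfH (k + 1) 2 = 2 ^ (k + 1) + (2 / 3) ^ (k + 1) := by
          simp only [halfH_succ, halfH_zero, ← one_div_pow]
          norm_num
        simp only [Pi.add_apply, h₁, h₂, h₃, mul_pow]
        ring
  have hint {α : ℝ} : HasPowerSums (lin 1 α)⁻¹ 1 fun k => -(α ^ k * H k 1) :=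
    (HasPowerSums.inv_lin one_ne_zero α).congr inv_one fun k => by simp [H]
  refine (((((HasPowerSums.lin (by norm_num) _).mul (.lin (by norm_num) _)).mul hhalf).mul
    hhalf).mul (hint.mul hint)).congr (by norm_num) fun k => ?_
  simp only [Pi.add_apply]
  ring

lemma hasPowerSums_familyNorm_mul_familyProd (u w : ℝ) (j : ℕ) :
    HasPowerSums (familyNorm u w * familyProd u w 0 j) (1 / ((j + 1) ^ 2 * (j + 3 / 2) ^ 2))
      fun k => ((1 + u) ^ k + (1 - u) ^ k) * (H k j - halfH k (j + 2)) +
        ((w - 1) ^ k + (-w - 1) ^ k) * halfH k (j + 1) -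
        ((3 - w) ^ k + (3 + w) ^ k) * H k (j + 1) := by
  induction j with
  | zero =>
    refine (hasPowerSums_familyNorm u w).mul .one |>.congr (by norm_num) fun k => ?_
    simp [H_zero, halfH_succ, halfH_zero, mul_pow]
    ring
  | succ j ih =>
    have hn (r : ℝ) (hr : 0 < r) : (((0 : ℕ) : ℝ) + j + r) ≠ 0 := by positivity
    have hj (r : ℝ) (hr : 0 < r) : ((j : ℝ) + r) ≠ 0 := by positivity
    have hone {α α' : ℝ} :=
      hasPowerSums_lin_mul_inv_lin (hj 1 one_pos) (hn 2 two_pos) α α'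
    have hthreeHalves {α α' : ℝ} :=
      hasPowerSums_lin_mul_inv_lin (hj (3 / 2) (by norm_num)) (hn (5 / 2) (by norm_num)) α α'
    rw [familyProd_succ, ← mul_assoc]
    refine (ih.mul (((hone.mul hone).mul hthreeHalves).mul hthreeHalves)).congr ?_ fun k => ?_
    · push_cast
      field_simp
      ring
    · simp only [Pi.add_apply, H_succ, halfH_succ, div_pow]
      push_cast
      ring

lemma hasPowerSums_familyNorm_mul_prod_familyFactor (u w : ℝ) (n : ℕ) :
    HasPowerSums (familyNorm u w * ∏ i ∈ range n, familyFactor u w i)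
      (altInvBinom n / (2 * (n + 1 / 2) * (n + 1) ^ 2 * (n + 3 / 2) ^ 2))
      fun k => (2 * (w - 1)) ^ k + (2 * (-w - 1)) ^ k +
        ((2 - u - w) ^ k + (2 - u + w) ^ k + (2 + u - w) ^ k + (2 + u + w) ^ k) * H k n +
        4 ^ k * halfH k n - 2 ^ k * (halfH k n + H k n) -
        ((1 - u) ^ k + (1 + u) ^ k) * halfH k (n + 2) -
        ((3 - w) ^ k + (3 + w) ^ k) * H k (n + 1) := by
  induction n with
  | zero =>
    refine (hasPowerSums_familyNorm u w).mul .one |>.congr (by norm_num [altInvBinom_zero])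
      fun k => ?_
    simp [H_zero, halfH_zero]
  | succ n ih =>
    have hpos (r : ℝ) (hr : 0 < r) : ((n : ℝ) + r) ≠ 0 := by positivity
    have hpos' (r : ℝ) (hr : 0 < r) : 2 * ((n : ℝ) + r) ≠ 0 := by positivity
    have h4 (x : ℝ) : 4 / (2 * x) = 2 / x := by rw [← div_div]; norm_num
    have hlin {m m' : ℝ} (hm : m ≠ 0) (hm' : m' ≠ 0) {α α' : ℝ} :=
      hasPowerSums_lin_mul_inv_lin hm hm' α α'
    rw [prod_range_succ, ← mul_assoc, familyFactor_eq, show 2 * (n : ℝ) + 2 = 2 * (n + 1) by ring,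
      show 2 * (n : ℝ) + 1 = 2 * (n + 1 / 2) by ring]
    refine (ih.mul (((((((hlin (hpos (3 / 2) (by norm_num)) (hpos (5 / 2) (by norm_num))).mul
      (hlin (hpos 1 one_pos) (hpos (5 / 2) (by norm_num)))).mul
      (hlin (hpos 1 one_pos) (hpos 2 two_pos))).mul
      (hlin (hpos 1 one_pos) (hpos 2 two_pos))).mul
      (hlin (hpos 1 one_pos) (hpos' 1 one_pos))).mul
      (hlin (hpos (1 / 2) (by norm_num)) (hpos' (1 / 2) (by norm_num)))).neg)).congr
      ?_ fun k => ?_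
    · rw [altInvBinom_succ]
      push_cast
      field_simp
      ring
    · simp only [Pi.add_apply, H_succ, halfH_succ, h4, div_pow]
      push_cast
      ring

end FamilyPowerSums

section AcceleratedTerms

lemma familyCert_zero (u w : ℝ) (n : ℕ) : familyCert u w n 0 =
    C (((n : ℝ) + 1) ^ 2 * (10 * n + 13) / 2) + C (((n : ℝ) + 1) * (30 * n + 37)) * X +
      C (58 * (n : ℝ) + 66 - (n + 3 / 2) * u ^ 2 - (n + 1 / 2) * w ^ 2) * X ^ 2 +
      C (36 - 4 * w ^ 2) * X ^ 3 := by
  simp only [familyCert, certPoly, paramA, paramB, paramC, paramD, paramE, natCast_eq_lin, lin]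
  simp only [← PowerSeries.algebraMap_eq]
  algebra

/-- The power sums of the roots of the factors of the `n`-th term of the accelerated series of the
family, apart from the certificate polynomial. -/
noncomputable def accelPowerSum (u w : ℝ) (n k : ℕ) : ℝ :=
  (2 * (w - 1)) ^ k + (2 * (-w - 1)) ^ k +
    ((2 - u - w) ^ k + (2 - u + w) ^ k + (2 + u - w) ^ k + (2 + u + w) ^ k) * H k n +
    4 ^ k * halfH k n - 2 ^ k * (halfH k (n + 1) + H k (n + 1)) -
    ((1 - u) ^ k + (1 + u) ^ k) * halfH k (n + 2) -
    ((3 - w) ^ k + (3 + w) ^ k) * H k (n + 1)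

lemma hasPowerSums_accel (u w : ℝ) (n : ℕ) : HasPowerSums
    (familyNorm u w * (∏ i ∈ range n, familyFactor u w i) * (familyExcess u w n)⁻¹)
    (altInvBinom n / (8 * (n + 1 / 2) ^ 2 * (n + 1) ^ 3 * (n + 3 / 2) ^ 2))
    (accelPowerSum u w n) := by
  have h₁ : 2 * (n : ℝ) + 1 = 2 * (n + 1 / 2) := by ring
  have h₂ : 2 * (n : ℝ) + 2 = 2 * (n + 1) := by ring
  have hslope (x : ℝ) : 4 / (2 * x) = 2 / x := by rw [← div_div]; norm_num
  rw [familyExcess_eq, PowerSeries.mul_inv_rev, h₁, h₂]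
  refine ((hasPowerSums_familyNorm_mul_prod_familyFactor u w n).mul
    ((HasPowerSums.inv_lin (by positivity) 4).mul (.inv_lin (by positivity) 4))).congr ?_
    fun k => ?_
  · field_simp
    norm_num
  · simp only [Pi.add_apply, accelPowerSum, H_succ, halfH_succ, hslope, div_pow]
    ring

/-- The coefficient of `X ^ 3` in the `n`-th term of the accelerated series of the family. -/
noncomputable def accelTerm (u w : ℝ) (n : ℕ) : ℝ :=
  coeff 3 (familyNorm u w * ((∏ i ∈ range n, familyFactor u w i) *
    (familyCert u w n 0 * (familyExcess u w n)⁻¹)))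

lemma accelTerm_eq (u w : ℝ) (n : ℕ) : accelTerm u w n =
    altInvBinom n / (8 * (n + 1 / 2) ^ 2 * (n + 1) ^ 3 * (n + 3 / 2) ^ 2) *
      (((n : ℝ) + 1) ^ 2 * (10 * n + 13) / 2 * ((accelPowerSum u w n 1 ^ 3 -
        3 * accelPowerSum u w n 1 * accelPowerSum u w n 2 + 2 * accelPowerSum u w n 3) / 6) +
      ((n : ℝ) + 1) * (30 * n + 37) *
        ((accelPowerSum u w n 1 ^ 2 - accelPowerSum u w n 2) / 2) +
      (58 * (n : ℝ) + 66 - (n + 3 / 2) * u ^ 2 - (n + 1 / 2) * w ^ 2) * accelPowerSum u w n 1 +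
      (36 - 4 * w ^ 2)) := by
  have h := hasPowerSums_accel u w n
  set f := familyNorm u w * (∏ i ∈ range n, familyFactor u w i) * (familyExcess u w n)⁻¹
  have hterm (z₀ z₁ z₂ z₃ : ℝ) : coeff 3 ((C z₀ + C z₁ * X + C z₂ * X ^ 2 + C z₃ * X ^ 3) * f) =
      z₀ * coeff 3 f + z₁ * coeff 2 f + z₂ * coeff 1 f + z₃ * coeff 0 f := by
    simp only [add_mul, mul_assoc, map_add, coeff_C_mul, coeff_succ_X_mul, pow_succ, pow_zero,
      one_mul]
  have hcomm : familyNorm u w * ((∏ i ∈ range n, familyFactor u w i) *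
      (familyCert u w n 0 * (familyExcess u w n)⁻¹)) = familyCert u w n 0 * f := by
    simp only [f]
    ring
  rw [accelTerm, hcomm, familyCert_zero, hterm, h.coeff_three, h.coeff_two, h.coeff_one,
    h.coeff_zero]
  ring

lemma accelPowerSum_one (u w : ℝ) (n : ℕ) : accelPowerSum u w n 1 =
    -4 - 4 / ((n : ℝ) + 1 / 2) - 2 / (n + 3 / 2) - 8 / (n + 1) := by
  simp only [accelPowerSum, H_succ, halfH_succ]
  push_cast
  ring_nf

/-- The weight `(-1)^(m-1) / (m³ binom(2m, m))` for `m = n + 1`. -/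
noncomputable def aperyWeight (n : ℕ) : ℝ := (-1) ^ n / ((n + 1) ^ 3 * (n + 1).centralBinom)

lemma aperyWeight_eq (n : ℕ) :
    aperyWeight n = altInvBinom n / (2 * (n + 1) ^ 2 * (2 * n + 1)) := by
  have h := altInvBinom_succ n
  have hsucc : aperyWeight n = -altInvBinom (n + 1) / (n + 1) ^ 3 := by
    rw [aperyWeight, altInvBinom, pow_succ, div_mul_eq_div_div_swap]
    ring
  rw [hsucc, h]
  field_simp

/-- The part of the accelerated terms which telescopes in the combination of
`accelTerm_combination`. -/
noncomputable def accelBoundary (n : ℕ) : ℝ :=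
  altInvBinom n * (-(2 * H 2 (2 * n) + 3 / 2 * H 2 n) / (2 * n + 1) ^ 3 - 10 / (2 * n + 1) ^ 5)

/-- In this combination the harmonic numbers of order `3` cancel. -/
lemma accelTerm_combination (n : ℕ) :
    -accelTerm 7 3 n / 4 + 10 * (accelTerm 1 1 n - accelTerm 0 0 n) =
      -80 * (aperyWeight n * (H 2 (2 * n + 1) + 3 / 4 * H 2 n - 27 / (4 * (n + 1) ^ 2))) +
        64 * (accelBoundary (n + 1) - accelBoundary n) := by
  have hhalf : halfH 2 n = 4 * H 2 (2 * n) - H 2 n := by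
    rw [halfH_eq]
    norm_num
  have hodd : H 2 (2 * n + 1) = H 2 (2 * n) + 1 / (2 * n + 1) ^ 2 := by
    rw [H_succ]
    push_cast
    ring
  have heven : H 2 (2 * (n + 1)) = H 2 (2 * n) + 1 / (2 * n + 1) ^ 2 + 1 / (2 * n + 2) ^ 2 := by
    rw [show 2 * (n + 1) = 2 * n + 1 + 1 by ring, H_succ, hodd]
    push_cast
    ring
  simp only [accelTerm_eq, accelPowerSum_one, aperyWeight_eq, accelBoundary, altInvBinom_succ,
    hodd, heven]
  simp only [accelPowerSum, H_succ, halfH_succ, hhalf]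
  push_cast
  field_simp
  ring

end AcceleratedTerms

section DougallEvaluation

lemma wpProd_succ' {k : Type*} [Field k] (a b c d e : k⟦X⟧) (j : ℕ) :
    wpProd a b c d e (j + 1) = quartic b c d e 0 * (wpLower a b c d e 0)⁻¹ *
      wpProd (a + 2) (b + 1) (c + 1) (d + 1) (e + 1) j := by
  have hupper (x : k⟦X⟧) : quartic (b + 1) (c + 1) (d + 1) (e + 1) x = quartic b c d e (x + 1) := by
    unfold quartic
    ring
  have hlower (x : k⟦X⟧) : wpLower (a + 2) (b + 1) (c + 1) (d + 1) (e + 1) x =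
      wpLower a b c d e (x + 1) := by
    unfold wpLower quartic
    ring
  simp only [wpProd, prod_range_succ', hupper, hlower, Nat.cast_succ, Nat.cast_zero]
  ring

/-- The products `wpProd` of the Dougall series with parameters `b, c, d = 8X, -6X, 1/2 - 4X` and
`a = n + 1/2 + 2X`. -/
noncomputable def dougallProd (n : ℕ) : ℕ → ℝ⟦X⟧ :=
  wpProd (lin (n + 1 / 2) 2) (lin (n + 1 / 2) 2) (lin 0 8) (lin 0 (-6)) (lin (1 / 2) (-4))

/-- The terms of the Dougall series with the products `dougallProd`. -/
noncomputable def dougallTerm (n j : ℕ) : ℝ⟦X⟧ := lin (n + 2 * j + 1 / 2) 2 * dougallProd n j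

/-- The product of the first `N` factors `dougallFactor`, normalised so that its power sums are
combinations of harmonic numbers. -/
noncomputable def dougallPrefactor (N : ℕ) : ℝ⟦X⟧ :=
  (lin (1 / 2) (-6))⁻¹ * (lin (1 / 2) 8)⁻¹ * ∏ i ∈ range N,
    dougallFactor (lin (i + 1 / 2) 2) (lin 0 8) (lin 0 (-6)) (lin (1 / 2) (-4))

lemma wpLower_dougall (n i : ℕ) :
    wpLower (lin (n + 1 / 2) 2) (lin (n + 1 / 2) 2) (lin 0 8) (lin 0 (-6)) (lin (1 / 2) (-4)) i =
      lin (i + 1) 0 * lin (n + i + 3 / 2) (-6) * lin (n + i + 3 / 2) 8 * lin (n + i + 1) 6 := by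
  simp only [wpLower, quartic, natCast_eq_lin, one_eq_lin, lin_add_lin, lin_sub_lin]
  ring_nf

lemma dougallProd_succ (n j : ℕ) : dougallProd n (j + 1) = dougallProd n j *
    ((lin (n + j + 1 / 2) 2 * (lin (n + j + 3 / 2) (-6))⁻¹) *
      (lin j 8 * (lin (n + j + 3 / 2) 8)⁻¹) * (lin j (-6) * (lin (n + j + 1) 6)⁻¹) *
      (lin (j + 1 / 2) (-4) * (lin (j + 1) 0)⁻¹)) := by
  have hupper : quartic (lin (n + 1 / 2) 2) (lin 0 8) (lin 0 (-6)) (lin (1 / 2) (-4)) (j : ℝ⟦X⟧) =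
      lin (n + j + 1 / 2) 2 * lin j 8 * lin j (-6) * lin (j + 1 / 2) (-4) := by
    simp only [quartic, natCast_eq_lin, lin_add_lin]
    ring_nf
  rw [dougallProd, wpProd_succ, wpLower_dougall, hupper]
  simp only [PowerSeries.mul_inv_rev]
  ring

lemma dougallFactor_lin (n : ℕ) :
    dougallFactor (lin (n + 1 / 2) 2) (lin 0 8) (lin 0 (-6)) (lin (1 / 2) (-4)) =
      (lin (n + 1 / 2) 2 * (lin (n + 3 / 2) (-6))⁻¹) * (lin (n + 3 / 2) 0 * (lin (n + 3 / 2) 8)⁻¹) *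
        ((lin (n + 1) (-2) * (lin (n + 1) 4)⁻¹) * (lin (n + 1) 12 * (lin (n + 1) 6)⁻¹)) := by
  simp only [dougallFactor, cubicLower, one_eq_lin, lin_add_lin, lin_sub_lin, add_zero,
    PowerSeries.mul_inv_rev]
  ring_nf

lemma hasPowerSums_dougallPrefactor (N : ℕ) : HasPowerSums (dougallPrefactor N) (2 / (N + 1 / 2))
    fun k => 2 ^ k * halfH k N - ((-6) ^ k + 8 ^ k) * halfH k (N + 1) +
      ((-2) ^ k + 12 ^ k - 6 ^ k - 4 ^ k) * H k N := by
  have hpos (n : ℕ) (r : ℝ) (hr : 0 < r) : (n : ℝ) + r ≠ 0 := by positivity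
  induction N with
  | zero =>
    refine (((HasPowerSums.inv_lin (by norm_num) _).mul (.inv_lin (by norm_num) _)).mul .one).congr
      (by norm_num) fun k => ?_
    simp only [Pi.add_apply, Pi.zero_apply, halfH_succ, halfH_zero, H_zero, div_pow, Nat.cast_zero,
      zero_add, one_div]
    ring
  | succ n ih =>
    have hlin {m m' : ℝ} (hm : m ≠ 0) (hm' : m' ≠ 0) {α α' : ℝ} :=
      hasPowerSums_lin_mul_inv_lin hm hm' α α'
    have h₁ := hpos n 1 one_pos
    have h₂ := hpos n (1 / 2) (by norm_num)
    have h₃ := hpos n (3 / 2) (by norm_num)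
    rw [dougallPrefactor, prod_range_succ, ← mul_assoc, dougallFactor_lin]
    refine (ih.mul (((hlin h₂ h₃).mul (hlin h₃ h₃)).mul ((hlin h₁ h₁).mul (hlin h₁ h₁)))).congr
      ?_ fun k => ?_
    · push_cast
      field_simp
      ring
    · simp only [Pi.add_apply, H_succ, halfH_succ, div_pow]
      push_cast
      ring

lemma hasPowerSums_dougallPrefactor_mul_lin (N : ℕ) :
    HasPowerSums (dougallPrefactor N * lin (N + 1 / 2) 2) 2 fun k =>
      (2 ^ k - (-6) ^ k - 8 ^ k) * halfH k (N + 1) +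
        ((-2) ^ k + 12 ^ k - 6 ^ k - 4 ^ k) * H k N := by
  refine ((hasPowerSums_dougallPrefactor N).mul (.lin (by positivity) 2)).congr
    (div_mul_cancel₀ _ (by positivity)) fun k => ?_
  simp only [Pi.add_apply, halfH_succ, div_pow]
  ring

lemma truncSeminorm_dougallPrefactor_bounded (m : ℕ) :
    ∃ C, ∀ N, truncSeminorm rad m (dougallPrefactor N) ≤ C := by
  obtain ⟨c, hc⟩ := truncSeminorm_bounded_of_tendsto_coeff (ρ := rad) (N := m)
    (HasPowerSums.exists_tendsto_coeff hasPowerSums_dougallPrefactor_mul_lin fun k => by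
      rcases k with _ | k
      · exact ⟨0, tendsto_const_nhds.congr fun n => by norm_num⟩
      · exact ⟨_, ((((tendsto_halfH (by omega)).comp (tendsto_add_atTop_nat 1)).const_mul _).add
          ((tendsto_H (by omega)).const_mul _))⟩)
  refine ⟨c * 3, fun N => ?_⟩
  have hslope := abs_mul_rad_le (α := 2) (by norm_num)
  have : (0 : ℝ) ≤ N := N.cast_nonneg
  have hcancel : dougallPrefactor N =
      dougallPrefactor N * lin (N + 1 / 2) 2 * (lin (N + 1 / 2) 2)⁻¹ := by
    rw [mul_assoc, lin_mul_inv (by positivity), mul_one]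
  rw [hcancel]
  refine truncSeminorm_mul_le_of_le (hc N) ((truncSeminorm_inv_lin_le (by linarith)).trans ?_)
  rw [div_le_iff₀ (by linarith)]
  linarith

lemma truncSeminorm_dougallProd_succ_le_mul {m n j : ℕ} {c : ℝ}
    (h : truncSeminorm rad m (dougallProd n j) ≤ c) :
    truncSeminorm rad m (dougallProd n (j + 1)) ≤
      c * ((n + j + 51 / 100) / (n + j + 149 / 100) *
        ((j + 1 / 100) / (n + j + 149 / 100)) * ((j + 1 / 100) / (n + j + 99 / 100)) *
          ((j + 51 / 100) / (j + 99 / 100))) := by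
  have : (0 : ℝ) ≤ n := n.cast_nonneg
  have : (0 : ℝ) ≤ j := j.cast_nonneg
  have hratio {M α M' α' p q : ℝ} (hM : 0 ≤ M) (hM' : 1 / 100 < M') (hα : |α| ≤ 12)
      (hα' : |α'| ≤ 12) (hp : M + 1 / 100 = p) (hq : M' - 1 / 100 = q) :
      truncSeminorm rad m (lin M α * (lin M' α')⁻¹) ≤ p / q :=
    truncSeminorm_rad_lin_mul_inv_le hM hα hα' hM' (by rw [hp, hq])
  rw [dougallProd_succ]
  refine truncSeminorm_mul_le_of_le h (truncSeminorm_mul_le_of_le (truncSeminorm_mul_le_of_le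
    (truncSeminorm_mul_le_of_le (hratio ?_ ?_ ?_ ?_ ?_ ?_) (hratio ?_ ?_ ?_ ?_ ?_ ?_))
    (hratio ?_ ?_ ?_ ?_ ?_ ?_)) (hratio ?_ ?_ ?_ ?_ ?_ ?_)) <;>
  first | linarith | norm_num

lemma truncSeminorm_dougallProd_succ_le (m n j : ℕ) :
    truncSeminorm rad m (dougallProd n (j + 1)) ≤
      6 / (((j : ℝ) + 1) * (j + 2) * (j + 3)) / (n + 1) ^ 2 := by
  induction j with
  | zero =>
    have hzero : dougallProd n 0 = 1 := wpProd_zero _ _ _ _ _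
    refine (truncSeminorm_dougallProd_succ_le_mul (hzero ▸ truncSeminorm_one_le)).trans ?_
    rw [one_mul]
    push_cast
    rw [div_mul_div_comm, div_mul_div_comm, div_mul_div_comm, div_div,
      div_le_div_iff₀ (by positivity) (by positivity), ← sub_nonneg]
    ring_nf
    positivity
  | succ j ih =>
    refine (truncSeminorm_dougallProd_succ_le_mul ih).trans ?_
    calc _ ≤ 6 / (((j : ℝ) + 1) * (j + 2) * (j + 3)) / (n + 1) ^ 2 * ((j + 1) / (j + 4)) := by
          gcongr
          push_cast
          rw [div_mul_div_comm, div_mul_div_comm, div_mul_div_comm,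
            div_le_div_iff₀ (by positivity) (by positivity), ← sub_nonneg]
          ring_nf
          positivity
      _ = _ := by
        push_cast
        field_simp
        ring

lemma truncSeminorm_sum_dougallTerm_succ_le (m n K : ℕ) :
    truncSeminorm rad m (∑ j ∈ range K, dougallTerm n (j + 1)) ≤ 9 / ((n : ℝ) + 1) := by
  have hterm (j : ℕ) : truncSeminorm rad m (dougallTerm n (j + 1)) ≤
      18 / ((n : ℝ) + 1) * (1 / (((j : ℝ) + 2) * (j + 3))) := by
    have : (0 : ℝ) ≤ n := n.cast_nonneg
    have : (0 : ℝ) ≤ j := j.cast_nonneg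
    calc truncSeminorm rad m (dougallTerm n (j + 1))
        ≤ 3 * ((n : ℝ) + 1) * (j + 1) *
            (6 / (((j : ℝ) + 1) * (j + 2) * (j + 3)) / (n + 1) ^ 2) := by
          refine truncSeminorm_mul_le_of_le ((truncSeminorm_rad_lin_le (by positivity)
            (by norm_num)).trans ?_) (truncSeminorm_dougallProd_succ_le m n j)
          push_cast
          nlinarith
      _ = _ := by
        field_simp
        ring
  calc _ ≤ ∑ j ∈ range K, 18 / ((n : ℝ) + 1) * (1 / (((j : ℝ) + 2) * (j + 3))) :=
        (truncSeminorm_sum_le _ _).trans (sum_le_sum fun j _ => hterm j)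
    _ ≤ 18 / ((n : ℝ) + 1) * (1 / 2) := by
      rw [← mul_sum]
      gcongr
      exact sum_inv_mul_succ_le K
    _ = 9 / ((n : ℝ) + 1) := by ring

lemma dougallTerm_zero (n : ℕ) : dougallTerm n 0 = lin (n + 1 / 2) 2 := by
  have hzero : dougallProd n 0 = 1 := wpProd_zero _ _ _ _ _
  simp [dougallTerm, hzero]

/-- The part of the certificate of `dougall_sum` which does not involve `K`. -/
noncomputable def dougallCert (n : ℕ) : ℝ⟦X⟧ := dougallPrefactor n * (lin (n + 1) 4)⁻¹

lemma dougallPrefactor_mul_sum (N K : ℕ) :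
    dougallPrefactor 0 * ∑ j ∈ range K, dougallTerm 0 j =
      dougallPrefactor N * ∑ j ∈ range K, dougallTerm N j - ∑ n ∈ range N,
        dougallCert n * (K * (K + lin (2 * n + 3 / 2) 6) * dougallProd n K) := by
  have hA (n : ℕ) : lin (1 / 2) 2 + (n : ℝ⟦X⟧) = lin (n + 1 / 2) 2 := by
    rw [natCast_eq_lin, lin_add_lin, add_zero, add_comm]
  have hterm (n j : ℕ) : lin (n + 1 / 2) 2 + 2 * (j : ℝ⟦X⟧) = lin (n + 2 * j + 1 / 2) 2 := by
    simp only [two_mul, natCast_eq_lin, lin_add_lin]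
    ring_nf
  have hexcess (n : ℕ) : 1 + lin (n + 1 / 2) 2 - (lin 0 8 + lin 0 (-6) + lin (1 / 2) (-4)) =
      lin (n + 1) 4 := by
    simp only [one_eq_lin, lin_add_lin, lin_sub_lin]
    ring_nf
  have hcert (n : ℕ) : (K : ℝ⟦X⟧) + 1 + 2 * lin (n + 1 / 2) 2 -
      (lin 0 8 + lin 0 (-6) + lin (1 / 2) (-4)) = K + lin (2 * n + 3 / 2) 6 := by
    simp only [two_mul, one_eq_lin, natCast_eq_lin, lin_add_lin, lin_sub_lin]
    ring_nf
  have h := dougall_sum (a := lin (1 / 2) 2) (b := lin 0 8) (c := lin 0 (-6))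
    (d := lin (1 / 2) (-4))
    (fun n => by
      rw [hA, hexcess]
      exact lin_ne_zero (by positivity) 4)
    (fun n i => by
      simp only [hA, wpLower_dougall, map_mul, constantCoeff_lin]
      positivity) N K
  have hA₀ : dougallProd 0 =
      wpProd (lin (1 / 2) 2) (lin (1 / 2) 2) (lin 0 8) (lin 0 (-6)) (lin (1 / 2) (-4)) := by
    simp [dougallProd]
  have hterm₀ (j : ℕ) : lin (1 / 2) 2 + 2 * (j : ℝ⟦X⟧) = lin ((0 : ℕ) + 2 * j + 1 / 2) 2 := by
    simpa using hterm 0 j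
  simp only [hA, hexcess, hcert, hterm, hterm₀, ← hA₀] at h
  simp only [dougallTerm, dougallPrefactor, dougallCert, dougallProd] at h ⊢
  rw [h, prod_range_zero, mul_one, mul_sub, ← mul_assoc, mul_sum (range N)]
  congr 1
  exact sum_congr rfl fun n _ => by ring

lemma tendsto_coeff_dougallProd_succ (g : ℝ⟦X⟧) (n m : ℕ) :
    Tendsto (fun K : ℕ => coeff m (g * (((K + 1 : ℕ) : ℝ⟦X⟧) *
      (((K + 1 : ℕ) : ℝ⟦X⟧) + lin (2 * n + 3 / 2) 6) * dougallProd n (K + 1)))) atTop (𝓝 0) := by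
  have hbound (K : ℕ) : truncSeminorm rad (m + 1) (dougallProd n (K + 1)) ≤
      6 / (((K : ℝ) + 1) * (K + 2) * (K + 3)) := by
    refine (truncSeminorm_dougallProd_succ_le _ n K).trans (div_le_self (by positivity) ?_)
    nlinarith [n.cast_nonneg (α := ℝ)]
  have h := tendsto_coeff_quadratic_mul rad_pos hbound g (g * (2 + lin (2 * n + 3 / 2) 6))
    (g * (1 + lin (2 * n + 3 / 2) 6)) m.lt_succ_self
  refine h.congr fun K => ?_
  push_cast
  ring_nf

lemma tendsto_coeff_dougallPrefactor_mul_lin :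
    Tendsto (fun N : ℕ => coeff 5 (dougallPrefactor N * lin (N + 1 / 2) 2)) atTop
      (𝓝 (-213504 * zeta 5 - 36864 * zeta 2 * zeta 3)) := by
  have hsum {s : ℕ} (hs : 2 ≤ s) (r r' : ℝ) :
      Tendsto (fun N => r * halfH s (N + 1) + r' * H s N) atTop
        (𝓝 (r * ((2 ^ s - 1) * zeta s) + r' * zeta s)) :=
    (((tendsto_halfH hs).comp (tendsto_add_atTop_nat 1)).const_mul r).add
      ((tendsto_H hs).const_mul r')
  have h := ((((hsum (s := 5) (by norm_num) (2 ^ 5 - (-6) ^ 5 - 8 ^ 5)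
      ((-2) ^ 5 + 12 ^ 5 - 6 ^ 5 - 4 ^ 5)).div_const 5).sub
    (((hsum le_rfl (2 ^ 2 - (-6) ^ 2 - 8 ^ 2) ((-2) ^ 2 + 12 ^ 2 - 6 ^ 2 - 4 ^ 2)).mul
      (hsum (s := 3) (by norm_num) (2 ^ 3 - (-6) ^ 3 - 8 ^ 3)
        ((-2) ^ 3 + 12 ^ 3 - 6 ^ 3 - 4 ^ 3))).div_const 6)).const_mul 2)
  refine (h.congr fun N => ?_).trans (by ring_nf; rfl)
  rw [(hasPowerSums_dougallPrefactor_mul_lin N).coeff_five (by norm_num)]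

lemma coeff_dougallPrefactor_zero_mul_lin :
    coeff 5 (dougallPrefactor 0 * lin (1 / 2) 2) = -614400 := by
  have h := (hasPowerSums_dougallPrefactor_mul_lin 0).coeff_five (by norm_num)
  norm_num [halfH_succ, halfH_zero, H_zero] at h
  norm_num [h]

lemma tendsto_sum_coeff_dougallTerm_succ :
    Tendsto (fun K => ∑ j ∈ range K, coeff 5 (dougallPrefactor 0 * dougallTerm 0 (j + 1))) atTop
      (𝓝 (-213504 * zeta 5 - 36864 * zeta 2 * zeta 3 + 614400)) := by
  obtain ⟨c, hc⟩ := truncSeminorm_dougallPrefactor_bounded 6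
  have hrad : (0 : ℝ) < rad ^ 5 := pow_pos (NNReal.coe_pos.2 rad_pos) 5
  have hsplit (N K : ℕ) : ∑ j ∈ range K, coeff 5 (dougallPrefactor 0 * dougallTerm 0 (j + 1)) =
      coeff 5 (dougallPrefactor N * ∑ j ∈ range K, dougallTerm N (j + 1)) +
      (coeff 5 (dougallPrefactor N * lin (N + 1 / 2) 2) -
        coeff 5 (dougallPrefactor 0 * lin (1 / 2) 2)) +
      -∑ n ∈ range N, coeff 5 (dougallCert n * (((K + 1 : ℕ) : ℝ⟦X⟧) *
        (((K + 1 : ℕ) : ℝ⟦X⟧) + lin (2 * n + 3 / 2) 6) * dougallProd n (K + 1))) := by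
    have h := congrArg (coeff 5) (dougallPrefactor_mul_sum N (K + 1))
    rw [sum_range_succ', sum_range_succ', dougallTerm_zero, dougallTerm_zero, mul_add, mul_add,
      map_sub, map_add, map_add, map_sum, Nat.cast_zero, zero_add, mul_sum, map_sum] at h
    linarith
  have hbound (N K : ℕ) : |coeff 5 (dougallPrefactor N * ∑ j ∈ range K, dougallTerm N (j + 1))| ≤
      c * 9 / rad ^ 5 * (1 / ((N : ℝ) + 1)) := by
    rw [div_mul_eq_mul_div, le_div_iff₀ hrad]
    exact (abs_coeff_mul_pow_le _ (Nat.lt_succ_self 5)).trans ((truncSeminorm_mul_le_of_le (hc N)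
      (truncSeminorm_sum_dougallTerm_succ_le 6 N K)).trans_eq (by ring))
  have hvanish : Tendsto (fun N : ℕ => c * 9 / rad ^ 5 * (1 / ((N : ℝ) + 1))) atTop (𝓝 0) := by
    rw [← mul_zero (c * 9 / (rad : ℝ) ^ 5)]
    exact tendsto_one_div_add_atTop_nhds_zero_nat.const_mul _
  obtain ⟨L, hS, hB⟩ := exists_tendsto_of_eq_add_add hsplit hbound hvanish fun N => by
    have h := tendsto_finsetSum (range N) fun n _ =>
      tendsto_coeff_dougallProd_succ (dougallCert n) n 5
    simpa only [sum_const_zero, neg_zero] using h.neg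
  have hlim := tendsto_coeff_dougallPrefactor_mul_lin.sub_const (-614400)
  rw [coeff_dougallPrefactor_zero_mul_lin] at hB
  rwa [tendsto_nhds_unique hB hlim, sub_neg_eq_add] at hS

lemma familyProd_seven_three (j : ℕ) : familyProd 7 3 0 j =
    wpProd (lin (0 + 1 / 2) 2 + 2) (lin (0 + 1 / 2) 2 + 1) (lin 0 8 + 1) (lin 0 (-6) + 1)
      (lin (1 / 2) (-4) + 1) j := by
  have hperm (a b c d e : ℝ⟦X⟧) : wpProd a b c d e j = wpProd a d b c e j :=
    prod_congr rfl fun i _ => by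
      unfold wpLower quartic
      ring_nf
  have h2 : (2 : ℝ⟦X⟧) = lin 2 0 := by simpa using natCast_eq_lin 2
  rw [familyProd, hperm, Nat.cast_zero, add_zero]
  simp only [paramA, paramB, paramC, paramD, paramE, one_eq_lin, h2, lin_add_lin]
  norm_num

lemma familyNorm_mul_familyTerm_eq_dougall (j : ℕ) :
    familyNorm 7 3 * familyTerm 7 3 0 j * (C (-48) * X ^ 2) =
      dougallPrefactor 0 * dougallTerm 0 (j + 1) := by
  have hquad : lin 0 8 * lin 0 (-6) = C (-48) * X ^ 2 := by
    simp only [lin, map_zero, zero_add]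
    rw [show (-48 : ℝ) = 8 * -6 by norm_num, map_mul]
    ring
  have hA : paramA + ((0 : ℕ) : ℝ⟦X⟧) + 2 * j = lin ((0 : ℕ) + 2 * (j + 1 : ℕ) + 1 / 2) 2 := by
    simp only [two_mul, paramA, natCast_eq_lin, lin_add_lin]
    push_cast
    ring_nf
  have hupper : quartic (lin (0 + 1 / 2) 2) (lin 0 8) (lin 0 (-6)) (lin (1 / 2) (-4)) 0 =
      lin (1 / 2) 2 * lin (1 / 2) (-4) * (lin 0 8 * lin 0 (-6)) := by
    rw [quartic]
    ring_nf
  have hlower := wpLower_dougall 0 0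
  simp only [Nat.cast_zero] at hlower
  have hdougall : dougallProd 0 (j + 1) = lin (1 / 2) 2 * lin (1 / 2) (-4) *
      (lin 0 8 * lin 0 (-6)) * ((lin 1 0)⁻¹ * (lin (3 / 2) (-6))⁻¹ * (lin (3 / 2) 8)⁻¹ *
        (lin 1 6)⁻¹) * familyProd 7 3 0 j := by
    rw [dougallProd, wpProd_succ', familyProd_seven_three, Nat.cast_zero, hupper, hlower]
    simp only [PowerSeries.mul_inv_rev, zero_add]
    ring
  rw [dougallTerm, hdougall, ← hA, hquad, familyTerm, familyNorm, dougallPrefactor,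
    prod_range_zero]
  norm_num
  ring

lemma tendsto_sum_familyTerm_seven_three :
    Tendsto (fun K => ∑ j ∈ range K, coeff 3 (familyNorm 7 3 * familyTerm 7 3 0 j)) atTop
      (𝓝 (4448 * zeta 5 + 768 * zeta 2 * zeta 3 - 12800)) := by
  have hcoeff (f : ℝ⟦X⟧) : coeff 5 (f * (C (-48) * X ^ 2)) = -48 * coeff 3 f := by
    rw [mul_left_comm, coeff_C_mul, coeff_mul_X_pow f 2 3]
  have h := tendsto_sum_coeff_dougallTerm_succ.const_mul (-1 / 48)
  refine (h.congr fun K => ?_).trans (by ring_nf; rfl)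
  rw [mul_sum]
  refine sum_congr rfl fun j _ => ?_
  rw [← familyNorm_mul_familyTerm_eq_dougall, hcoeff]
  ring

end DougallEvaluation

section AlternatingEulerSum

lemma abs_H_one_add_sub_le (m d : ℕ) : |H 1 (m + d) - H 1 m| ≤ d / ((m : ℝ) + 1) := by
  rw [H_add, add_sub_cancel_left]
  refine (abs_sum_le_sum_abs _ _).trans ((sum_le_card_nsmul _ _ (1 / ((m : ℝ) + 1))
    fun q _ => ?_).trans_eq (by simp [div_eq_mul_inv]))
  rw [pow_one, abs_of_nonneg (by positivity)]
  gcongr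
  linarith [q.cast_nonneg (α := ℝ)]

lemma abs_altH_one_add_sub_le (m d : ℕ) : |altH 1 (m + d) - altH 1 m| ≤ d / ((m : ℝ) + 1) := by
  rw [altH_add, add_sub_cancel_left]
  refine (abs_sum_le_sum_abs _ _).trans ((sum_le_card_nsmul _ _ (1 / ((m : ℝ) + 1))
    fun q _ => ?_).trans_eq (by simp [div_eq_mul_inv]))
  rw [pow_one, abs_div, abs_neg_one_pow, abs_of_nonneg (by positivity)]
  gcongr
  linarith [q.cast_nonneg (α := ℝ)]

lemma tendsto_sum_range_zero_of_abs_le {e : ℕ → ℕ → ℝ} {c : ℝ}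
    (h : ∀ N i, i < N → |e N i| ≤ c / (((i : ℝ) + 1) ^ 2 * (N + 1))) :
    Tendsto (fun N => ∑ i ∈ range N, e N i) atTop (𝓝 0) := by
  have hc : 0 ≤ c := by
    have h₀ := (abs_nonneg _).trans (h 1 0 one_pos)
    rwa [le_div_iff₀ (by positivity), zero_mul] at h₀
  refine squeeze_zero_norm (fun N => ?_) (((tendsto_one_div_add_atTop_nhds_zero_nat
    (𝕜 := ℝ)).const_mul (c * zeta 2)).trans (by simp))
  calc ‖∑ i ∈ range N, e N i‖ ≤ ∑ i ∈ range N, c / (((i : ℝ) + 1) ^ 2 * (N + 1)) :=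
        (norm_sum_le _ _).trans (sum_le_sum fun i hi => h N i (mem_range.1 hi))
    _ = c * H 2 N * (1 / ((N : ℝ) + 1)) := by
        rw [H, mul_sum, sum_mul]
        exact sum_congr rfl fun i _ => by field_simp
    _ ≤ c * zeta 2 * (1 / ((N : ℝ) + 1)) := by gcongr; exact H_le_zeta le_rfl N

/-- The partial fraction kernel `2m / (k² - m²)` for `m = i + 1` and `k = j + 1`. On the diagonal
the pole contributes `1 / 0 = 0`. -/
noncomputable def poleKernel (i j : ℕ) : ℝ := 1 / ((j : ℝ) - i) - 1 / ((j : ℝ) + i + 2)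

lemma sum_poleKernel_left (j : ℕ) :
    ∑ i ∈ range j, poleKernel i j = H 1 j + H 1 (j + 1) - H 1 (2 * j + 1) := by
  have hpole : ∑ i ∈ range j, 1 / ((j : ℝ) - i) = H 1 j := by
    rw [H, ← sum_range_reflect]
    refine sum_congr rfl fun i hi => ?_
    rw [Nat.sub_sub, Nat.cast_sub (by have := mem_range.1 hi; omega)]
    push_cast
    ring_nf
  have htail := H_add 1 (j + 1) j
  rw [show j + 1 + j = 2 * j + 1 by ring] at htail
  simp only [poleKernel, sum_sub_distrib, hpole, htail]
  push_cast
  ring_nf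

lemma sum_poleKernel (j e : ℕ) : ∑ i ∈ range (j + 1 + e), poleKernel i j =
    H 1 j + H 1 (j + 1) - H 1 e - H 1 (2 * (j + 1) + e) := by
  have hright : ∑ q ∈ range e, poleKernel (j + 1 + q) j =
      -H 1 e - (H 1 (2 * (j + 1) + e) - H 1 (2 * (j + 1))) := by
    rw [H_add, add_sub_cancel_left, H, ← sum_neg_distrib, ← sum_sub_distrib]
    refine sum_congr rfl fun q _ => ?_
    rw [poleKernel]
    push_cast
    rw [show (j : ℝ) - (j + 1 + q) = -(q + 1) by ring, one_div_neg_eq_neg_one_div]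
    ring_nf
  rw [sum_range_add, sum_range_succ, sum_poleKernel_left, hright, poleKernel,
    show 2 * (j + 1) = 2 * j + 1 + 1 by ring, H_succ 1 (2 * j + 1)]
  push_cast
  rw [sub_self, div_zero]
  ring_nf

lemma neg_one_pow_mul_self (n : ℕ) : (-1 : ℝ) ^ n * (-1) ^ n = 1 := by
  rw [← mul_pow, neg_one_mul, neg_neg, one_pow]

lemma sum_neg_one_pow_mul_poleKernel_right (i e : ℕ) :
    ∑ q ∈ range e, (-1 : ℝ) ^ (i + 1 + q + 1) * poleKernel i (i + 1 + q) =
      (-1) ^ (i + 1) * (altH 1 e - altH 1 (2 * (i + 1) + e) + altH 1 (2 * (i + 1))) := by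
  rw [altH_add, sub_add, add_sub_cancel_left, altH, ← sum_sub_distrib, mul_sum]
  refine sum_congr rfl fun q _ => ?_
  rw [poleKernel, add_assoc (2 * (i + 1)), pow_add _ (2 * (i + 1)), (even_two_mul _).neg_one_pow,
    add_assoc (i + 1), pow_add _ (i + 1)]
  push_cast
  rw [show (i : ℝ) + 1 + q - i = q + 1 by ring]
  ring_nf

lemma sum_neg_one_pow_mul_poleKernel_left (i : ℕ) :
    ∑ j ∈ range (i + 1), (-1 : ℝ) ^ (j + 1) * poleKernel i j =
      1 / ((i : ℝ) + 1) - (-1) ^ (i + 1) * altH 1 (2 * (i + 1)) := by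
  have hpole : ∑ j ∈ range (i + 1), (-1 : ℝ) ^ (j + 1) * (1 / ((j : ℝ) - i)) =
      -((-1) ^ (i + 1) * altH 1 i) := by
    rw [← sum_range_reflect, sum_range_succ', altH, mul_sum, ← sum_neg_distrib]
    simp only [add_tsub_cancel_right, tsub_zero, sub_self, div_zero, mul_zero, add_zero]
    refine sum_congr rfl fun q hq => ?_
    obtain ⟨d, rfl⟩ := Nat.exists_eq_add_of_lt (mem_range.1 hq)
    rw [show q + d + 1 - (q + 1) = d by omega, show q + d + 1 + 1 = (d + 1) + (q + 1) by ring,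
      pow_add]
    push_cast
    rw [show (d : ℝ) - (q + d + 1) = -(q + 1) by ring, one_div_neg_eq_neg_one_div]
    linear_combination (1 / ((q : ℝ) + 1) * (-1) ^ (d + 1)) * neg_one_pow_mul_self (q + 1)
  have htail : ∑ j ∈ range (i + 1), (-1 : ℝ) ^ (j + 1) * (1 / ((j : ℝ) + i + 2)) =
      (-1) ^ (i + 1) * (altH 1 (2 * (i + 1)) - altH 1 (i + 1)) := by
    rw [two_mul, altH_add, add_sub_cancel_left, mul_sum]
    refine sum_congr rfl fun j _ => ?_
    rw [add_assoc (i + 1), pow_add]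
    push_cast
    rw [show (i : ℝ) + 1 + j + 1 = j + i + 2 by ring, pow_one]
    linear_combination (-(-1 : ℝ) ^ (j + 1) * (1 / ((j : ℝ) + i + 2))) *
      neg_one_pow_mul_self (i + 1)
  simp only [poleKernel, mul_sub, sum_sub_distrib, hpole, htail, altH_succ]
  linear_combination (1 / ((i : ℝ) + 1)) * neg_one_pow_mul_self (i + 1)

lemma sum_neg_one_pow_mul_poleKernel (i e : ℕ) :
    ∑ j ∈ range (i + 1 + e), (-1 : ℝ) ^ (j + 1) * poleKernel i j =
      (-1) ^ (i + 1) * (altH 1 e - altH 1 (2 * (i + 1) + e)) + 1 / ((i : ℝ) + 1) := by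
  rw [sum_range_add, sum_neg_one_pow_mul_poleKernel_left, sum_neg_one_pow_mul_poleKernel_right]
  ring

lemma sum_range_sum_range_comm (g : ℕ → ℕ → ℝ) (N : ℕ) :
    ∑ j ∈ range N, ∑ i ∈ range j, g i j =
      ∑ i ∈ range N, ∑ q ∈ range (N - (i + 1)), g i (i + 1 + q) := by
  simp only [← sum_Ico_eq_sum_range]
  refine sum_comm' fun i j => ?_
  simp only [mem_range, mem_Ico]
  omega

/-- The error of truncating the alternating sums over the rows of `poleKernel`. -/
noncomputable def rowError (N i : ℕ) : ℝ :=
  (-1) ^ (i + 1) * (altH 1 (N - (i + 1)) - altH 1 (N + (i + 1))) / ((i : ℝ) + 1) ^ 4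

/-- The error of truncating the sums over the columns of `poleKernel`. -/
noncomputable def columnError (N j : ℕ) : ℝ :=
  (-1) ^ (j + 1) * (H 1 N - H 1 (N - (j + 1)) / 2 - H 1 (N + (j + 1)) / 2) / ((j : ℝ) + 1) ^ 4

lemma exists_eq_succ_add {N i : ℕ} (h : i < N) : ∃ e, N = i + 1 + e :=
  Nat.exists_eq_add_of_le (Nat.succ_le_of_lt h)

lemma succ_mul_le_two_mul (i e : ℕ) :
    ((i : ℝ) + 1) ^ 2 * (((i + 1 + e : ℕ) : ℝ) + 1) ≤ 2 * (e + 1) * ((i : ℝ) + 1) ^ 3 := by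
  have h : (((i + 1 + e : ℕ) : ℝ) + 1) ≤ 2 * (e + 1) * (i + 1) := by
    push_cast
    nlinarith [mul_nonneg (i.cast_nonneg (α := ℝ)) (e.cast_nonneg (α := ℝ)),
      i.cast_nonneg (α := ℝ), e.cast_nonneg (α := ℝ)]
  nlinarith [sq_nonneg ((i : ℝ) + 1)]

lemma tendsto_sum_range_zero_of_abs_le_div {x : ℕ → ℕ → ℝ}
    (h : ∀ i e : ℕ, |x (i + 1 + e) i| ≤ 2 * ((i : ℝ) + 1) / (e + 1)) :
    Tendsto (fun N => ∑ i ∈ range N, (-1) ^ (i + 1) * x N i / ((i : ℝ) + 1) ^ 4) atTop (𝓝 0) := by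
  refine tendsto_sum_range_zero_of_abs_le (c := 4) fun N i hi => ?_
  obtain ⟨e, rfl⟩ := exists_eq_succ_add hi
  rw [abs_div, abs_mul, abs_neg_one_pow, one_mul,
    abs_of_nonneg (by positivity : 0 ≤ ((i : ℝ) + 1) ^ 4)]
  calc |x (i + 1 + e) i| / ((i : ℝ) + 1) ^ 4
      ≤ 2 * ((i : ℝ) + 1) / (e + 1) / ((i : ℝ) + 1) ^ 4 := by gcongr; exact h i e
    _ = 4 / (2 * (e + 1) * ((i : ℝ) + 1) ^ 3) := by field_simp; norm_num
    _ ≤ _ := div_le_div_of_nonneg_left (by norm_num) (by positivity) (succ_mul_le_two_mul i e)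

lemma tendsto_sum_rowError : Tendsto (fun N => ∑ i ∈ range N, rowError N i) atTop (𝓝 0) := by
  refine tendsto_sum_range_zero_of_abs_le_div fun i e => ?_
  have h := abs_altH_one_add_sub_le e (2 * (i + 1))
  rw [add_tsub_cancel_left, abs_sub_comm,
    show i + 1 + e + (i + 1) = e + 2 * (i + 1) by ring]
  exact_mod_cast h

lemma tendsto_sum_columnError : Tendsto (fun N => ∑ j ∈ range N, columnError N j) atTop (𝓝 0) := by
  refine tendsto_sum_range_zero_of_abs_le_div fun j e => ?_
  have hleft := abs_H_one_add_sub_le e (j + 1)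
  have hright := abs_H_one_add_sub_le (j + 1 + e) (j + 1)
  have hmono : ((j + 1 : ℕ) : ℝ) / (((j + 1 + e : ℕ) : ℝ) + 1) ≤ ((j + 1 : ℕ) : ℝ) / (e + 1) := by
    gcongr
    linarith [j.cast_nonneg (α := ℝ)]
  have hdouble : 2 * ((j : ℝ) + 1) / (e + 1) = 2 * (((j + 1 : ℕ) : ℝ) / (e + 1)) := by
    push_cast
    ring
  rw [add_tsub_cancel_left, hdouble]
  rw [add_comm e (j + 1), abs_le] at hleft
  rw [abs_le] at hright ⊢
  constructor <;> linarith [hleft.1, hleft.2, hright.1, hright.2]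

/-- The general term of the alternating Euler sum `∑ (-1)^k (H_{k-1} / k⁴ + H_{k-1}^{(3)} / k²)`,
for `k = n + 1`. -/
noncomputable def altEulerTerm (n : ℕ) : ℝ :=
  (-1) ^ (n + 1) * (H 1 n / ((n : ℝ) + 1) ^ 4 + H 3 n / ((n : ℝ) + 1) ^ 2)

lemma poleKernel_mul_sub {i j : ℕ} (h : i < j) :
    poleKernel i j * (1 / ((i : ℝ) + 1) ^ 4 - 1 / ((j : ℝ) + 1) ^ 4) =
      2 * (1 / ((i : ℝ) + 1) ^ 1 / ((j : ℝ) + 1) ^ 4 +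
        1 / ((i : ℝ) + 1) ^ 3 / ((j : ℝ) + 1) ^ 2) := by
  obtain ⟨d, rfl⟩ := exists_eq_succ_add h
  rw [poleKernel]
  push_cast
  rw [show (i : ℝ) + 1 + d - i = d + 1 by ring]
  field_simp
  ring

lemma two_mul_altEulerTerm (j : ℕ) : 2 * altEulerTerm j =
    ∑ i ∈ range j, (-1) ^ (j + 1) * poleKernel i j / ((i : ℝ) + 1) ^ 4 -
      (-1) ^ (j + 1) * (H 1 j + H 1 (j + 1) - H 1 (2 * j + 1)) / ((j : ℝ) + 1) ^ 4 := by
  rw [← sum_poleKernel_left, altEulerTerm, H, H, sum_div, sum_div, ← sum_add_distrib, mul_sum,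
    mul_sum, mul_sum, sum_div, ← sum_sub_distrib]
  refine sum_congr rfl fun i hi => ?_
  linear_combination -(-1 : ℝ) ^ (j + 1) * poleKernel_mul_sub (mem_range.1 hi)

lemma two_mul_sum_altEulerTerm (N : ℕ) : 2 * ∑ j ∈ range N, altEulerTerm j =
    ∑ i ∈ range N, rowError N i - ∑ j ∈ range N, (-1) ^ (j + 1) * H 1 j / ((j : ℝ) + 1) ^ 4 -
      altH 5 N / 2 := by
  rw [mul_sum]
  simp only [two_mul_altEulerTerm]
  rw [sum_sub_distrib, sum_range_sum_range_comm, ← sum_sub_distrib, altH, sum_div,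
    ← sum_sub_distrib, ← sum_sub_distrib]
  refine sum_congr rfl fun i hi => ?_
  obtain ⟨e, rfl⟩ := exists_eq_succ_add (mem_range.1 hi)
  rw [add_tsub_cancel_left, ← sum_div, sum_neg_one_pow_mul_poleKernel_right, rowError,
    add_tsub_cancel_left, altH_two_mul, show i + 1 + e + (i + 1) = 2 * (i + 1) + e by ring,
    show 2 * (i + 1) = 2 * i + 1 + 1 by ring, H_succ, H_succ]
  push_cast
  field_simp
  ring

lemma poleKernel_partialFraction (i j : ℕ) :
    (-1 : ℝ) ^ (j + 1) / ((j : ℝ) + 1) ^ 2 * (1 / ((i : ℝ) + 1) ^ 3) =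
      (-1) ^ (j + 1) * poleKernel i j / (2 * ((i : ℝ) + 1) ^ 4) -
      (-1) ^ (j + 1) / ((j : ℝ) + 1) ^ 4 * (1 / ((i : ℝ) + 1) ^ 1 + poleKernel i j / 2) +
      if i = j then 2 * ((-1 : ℝ) ^ (j + 1) / ((j : ℝ) + 1) ^ 5) else 0 := by
  rw [poleKernel]
  split_ifs with h
  · subst h
    rw [sub_self, div_zero]
    field_simp
    ring
  · have hsub : (j : ℝ) - i ≠ 0 := sub_ne_zero.2 (Nat.cast_injective.ne (Ne.symm h))
    have hadd : (j : ℝ) + i + 2 ≠ 0 := by positivity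
    field_simp
    ring

lemma altH_two_mul_H_three (N : ℕ) : altH 2 N * H 3 N =
    (∑ i ∈ range N, rowError N i + H 5 N) / 2 -
      ∑ j ∈ range N, (-1) ^ (j + 1) * H 1 j / ((j : ℝ) + 1) ^ 4 -
      ∑ j ∈ range N, columnError N j + 3 / 2 * altH 5 N := by
  have hrow : ∑ j ∈ range N, ∑ i ∈ range N,
      (-1) ^ (j + 1) * poleKernel i j / (2 * ((i : ℝ) + 1) ^ 4) =
      (∑ i ∈ range N, rowError N i + H 5 N) / 2 := by
    rw [sum_comm, H, ← sum_add_distrib, sum_div]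
    refine sum_congr rfl fun i hi => ?_
    obtain ⟨e, rfl⟩ := exists_eq_succ_add (mem_range.1 hi)
    rw [← sum_div, sum_neg_one_pow_mul_poleKernel, rowError, add_tsub_cancel_left,
      show i + 1 + e + (i + 1) = 2 * (i + 1) + e by ring]
    field_simp
  have hcolumn : ∑ j ∈ range N, ∑ i ∈ range N, (-1) ^ (j + 1) / ((j : ℝ) + 1) ^ 4 *
      (1 / ((i : ℝ) + 1) ^ 1 + poleKernel i j / 2) =
      ∑ j ∈ range N, (-1) ^ (j + 1) * H 1 j / ((j : ℝ) + 1) ^ 4 +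
        ∑ j ∈ range N, columnError N j + 1 / 2 * altH 5 N := by
    rw [altH, mul_sum, ← sum_add_distrib, ← sum_add_distrib]
    refine sum_congr rfl fun j hj => ?_
    rw [← mul_sum, sum_add_distrib, ← H, ← sum_div]
    obtain ⟨e, rfl⟩ := exists_eq_succ_add (mem_range.1 hj)
    rw [sum_poleKernel, columnError, add_tsub_cancel_left,
      show j + 1 + e + (j + 1) = 2 * (j + 1) + e by ring, H_succ 1 j]
    field_simp
    ring
  have hdiag : ∑ j ∈ range N, ∑ i ∈ range N,
      (if i = j then 2 * ((-1 : ℝ) ^ (j + 1) / ((j : ℝ) + 1) ^ 5) else 0) = 2 * altH 5 N := by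
    rw [altH, mul_sum]
    exact sum_congr rfl fun j hj => by rw [sum_ite_eq', if_pos hj]
  rw [altH, H, sum_mul_sum]
  simp only [poleKernel_partialFraction, sum_add_distrib, sum_sub_distrib] at hrow hcolumn hdiag ⊢
  rw [hrow, hcolumn, hdiag]
  ring

/-- Eliminating the linear Euler sum `∑ (-1)^k H_{k-1} / k⁴` between the two finite identities. -/
lemma tendsto_sum_altEulerTerm : Tendsto (fun N => ∑ n ∈ range N, altEulerTerm n) atTop
    (𝓝 (11 / 16 * zeta 5 - zeta 2 * zeta 3 / 4)) := by
  have hprod := (tendsto_altH le_rfl).mul (tendsto_H (s := 3) (by norm_num))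
  have halt := tendsto_altH (s := 5) (by norm_num)
  have hlim := ((((hprod.sub (halt.const_mul 2)).sub
    ((tendsto_H (s := 5) (by norm_num)).const_mul (1 / 2))).add
    (tendsto_sum_rowError.const_mul (1 / 2))).add tendsto_sum_columnError).const_mul (1 / 2)
  refine (hlim.congr fun N => ?_).trans (by ring_nf; rfl)
  linear_combination (1 / 2) * altH_two_mul_H_three N - (1 / 2) * two_mul_sum_altEulerTerm N

end AlternatingEulerSum

section FamilyDifference

/-- The power sums of the `j`-th term of the family. -/
noncomputable def familyPowerSum (u w : ℝ) (j k : ℕ) : ℝ :=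
  ((1 + u) ^ k + (1 - u) ^ k) * (H k j - halfH k (j + 2)) +
    ((w - 1) ^ k + (-w - 1) ^ k) * halfH k (j + 1) - ((3 - w) ^ k + (3 + w) ^ k) * H k (j + 1) +
    (2 / (2 * j + 5 / 2)) ^ k

lemma hasPowerSums_familyNorm_mul_familyTerm (u w : ℝ) (j : ℕ) :
    HasPowerSums (familyNorm u w * familyTerm u w 0 j)
      ((2 * j + 5 / 2) / ((j + 1) ^ 2 * (j + 3 / 2) ^ 2)) (familyPowerSum u w j) := by
  have hterm : familyNorm u w * familyTerm u w 0 j =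
      familyNorm u w * familyProd u w 0 j * lin (2 * j + 5 / 2) 2 := by
    have hfactor : paramA + (0 : ℕ) + 2 * (j : ℝ⟦X⟧) = lin (2 * j + 5 / 2) 2 := by
      simp only [paramA, lin, Nat.cast_zero, map_add, map_mul, map_natCast, map_ofNat]
      ring
    rw [familyTerm, hfactor]
    ring
  rw [hterm]
  exact ((hasPowerSums_familyNorm_mul_familyProd u w j).mul
    (.lin (by positivity) 2)).congr (by ring) fun k => rfl

lemma coeff_family_one_sub_zero (j : ℕ) : coeff 3 (familyNorm 1 1 * familyTerm 1 1 0 j) -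
    coeff 3 (familyNorm 0 0 * familyTerm 0 0 0 j) = -256 *
      (altEulerTerm (2 * j + 1) + altEulerTerm (2 * j + 2) +
        2 * (altH 5 (2 * j + 3) - altH 5 (2 * j + 1)) + (H 5 (2 * j + 3) - H 5 (2 * j + 1))) := by
  rw [(hasPowerSums_familyNorm_mul_familyTerm 1 1 j).coeff_three,
    (hasPowerSums_familyNorm_mul_familyTerm 0 0 j).coeff_three]
  have hodd : (-1 : ℝ) ^ (2 * j + 1) = -1 := (even_two_mul j).add_one.neg_one_pow
  simp only [familyPowerSum, altEulerTerm, H_succ, altH_succ, halfH_succ, halfH_eq,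
    pow_succ _ (2 * j + 1), pow_succ _ (2 * j + 1 + 1), hodd]
  push_cast
  field_simp
  ring

lemma sum_coeff_family_one_sub_zero (K : ℕ) :
    ∑ j ∈ range K, coeff 3 (familyNorm 1 1 * familyTerm 1 1 0 j) -
      ∑ j ∈ range K, coeff 3 (familyNorm 0 0 * familyTerm 0 0 0 j) =
    -256 * (∑ n ∈ range (2 * K + 1), altEulerTerm n + 2 * altH 5 (2 * K + 1) +
      H 5 (2 * K + 1) + 1) := by
  rw [← sum_sub_distrib]
  induction K with
  | zero => norm_num [altEulerTerm, H_succ, H_zero, altH_succ, altH_zero]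
  | succ K ih =>
    rw [sum_range_succ, ih, coeff_family_one_sub_zero,
      show 2 * (K + 1) + 1 = 2 * K + 1 + 1 + 1 by ring, sum_range_succ _ (2 * K + 1 + 1),
      sum_range_succ _ (2 * K + 1)]
    ring

lemma tendsto_sum_coeff_family_one_sub_zero : Tendsto (fun K =>
    ∑ j ∈ range K, coeff 3 (familyNorm 1 1 * familyTerm 1 1 0 j) -
      ∑ j ∈ range K, coeff 3 (familyNorm 0 0 * familyTerm 0 0 0 j)) atTop
    (𝓝 (48 * zeta 5 + 64 * zeta 2 * zeta 3 - 256)) := by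
  have halt := (tendsto_altH (s := 5) (by norm_num)).const_mul 2
  have hlim := (((tendsto_sum_altEulerTerm.add halt).add
    (tendsto_H (s := 5) (by norm_num))).add_const 1).const_mul (-256)
  simp only [sum_coeff_family_one_sub_zero]
  exact (hlim.comp ((tendsto_add_atTop_nat 1).comp tendsto_two_mul_atTop)).trans (by ring_nf; rfl)

end FamilyDifference

section Combination

lemma abs_altInvBinom_le (n : ℕ) : |altInvBinom n| ≤ 1 := by
  rw [altInvBinom, abs_div, abs_neg_one_pow, abs_of_nonneg (by positivity)]
  exact div_le_one_of_le₀ (by exact_mod_cast n.centralBinom_pos) (by positivity)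

lemma accelBoundary_zero : accelBoundary 0 = -10 := by
  norm_num [accelBoundary, altInvBinom_zero, H_zero]

lemma tendsto_accelBoundary : Tendsto accelBoundary atTop (𝓝 0) := by
  have hodd : Tendsto (fun n : ℕ => 2 * (n : ℝ) + 1) atTop atTop :=
    tendsto_atTop_add_const_right _ _ (tendsto_natCast_atTop_atTop.const_mul_atTop two_pos)
  have hpow {m : ℕ} (hm : m ≠ 0) :
      Tendsto (fun n : ℕ => (2 * (n : ℝ) + 1) ^ m) atTop atTop := (tendsto_pow_atTop hm).comp hodd
  have hH := tendsto_H (s := 2) le_rfl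
  have hbracket : Tendsto (fun n : ℕ => -(2 * H 2 (2 * n) + 3 / 2 * H 2 n) / (2 * (n : ℝ) + 1) ^ 3 -
      10 / (2 * (n : ℝ) + 1) ^ 5) atTop (𝓝 (0 - 0)) :=
    ((((hH.comp tendsto_two_mul_atTop).const_mul 2).add (hH.const_mul (3 / 2))).neg.div_atTop
      (hpow (by norm_num))).sub (tendsto_const_nhds.div_atTop (hpow (by norm_num)))
  rw [sub_zero] at hbracket
  refine squeeze_zero_norm (fun n => ?_) (tendsto_zero_iff_norm_tendsto_zero.1 hbracket)
  rw [accelBoundary, norm_mul]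
  exact mul_le_of_le_one_left (norm_nonneg _) (abs_altInvBinom_le n)

lemma tendsto_sum_aperyWeight_accel : Tendsto (fun N => ∑ n ∈ range N,
      aperyWeight n * (H 2 (2 * n + 1) + 3 / 4 * H 2 n - 27 / (4 * (n + 1) ^ 2))) atTop
    (𝓝 (79 / 10 * zeta 5 - 28 / 5 * zeta 2 * zeta 3)) := by
  have haccel (u w : ℝ) (hu : |u| ≤ 7) (hw : |w| ≤ 3) :=
    exists_tendsto_sum_familyTerm hu hw (familyNorm u w) 3
  have hseven : Tendsto (fun N => ∑ n ∈ range N, accelTerm 7 3 n) atTop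
      (𝓝 (4448 * zeta 5 + 768 * zeta 2 * zeta 3 - 12800)) := by
    obtain ⟨L, hL, h⟩ := haccel 7 3 (by norm_num) (by norm_num)
    rwa [← tendsto_nhds_unique hL tendsto_sum_familyTerm_seven_three]
  have hdiff : Tendsto (fun N => ∑ n ∈ range N, accelTerm 1 1 n - ∑ n ∈ range N, accelTerm 0 0 n)
      atTop (𝓝 (48 * zeta 5 + 64 * zeta 2 * zeta 3 - 256)) := by
    obtain ⟨L₁, hL₁, h₁⟩ := haccel 1 1 (by norm_num) (by norm_num)
    obtain ⟨L₀, hL₀, h₀⟩ := haccel 0 0 (by norm_num) (by norm_num)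
    rw [← tendsto_nhds_unique (hL₁.sub hL₀) tendsto_sum_coeff_family_one_sub_zero]
    exact h₁.sub h₀
  have hlim := (((hseven.const_mul (-1 / 4)).add (hdiff.const_mul 10)).sub
    ((tendsto_accelBoundary.sub_const (accelBoundary 0)).const_mul 64)).const_mul (-1 / 80)
  refine (hlim.congr fun N => ?_).trans (by rw [accelBoundary_zero]; ring_nf; rfl)
  have hsum := sum_congr rfl fun n (_ : n ∈ range N) => accelTerm_combination n
  simp only [sum_add_distrib, ← mul_sum, sum_range_sub, ← sum_div, sum_neg_distrib,
    sum_sub_distrib (fun n => accelTerm 1 1 n)] at hsum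
  linarith

end Combination

section KoecherSeries

/-- The kernel `(n - k - 1)! / (n + k)! = 1 / (n (n² - 1²) ⋯ (n² - k²))` of Koecher's expansion,
for `k < n`. -/
noncomputable def koecherKernel (n k : ℕ) : ℝ := (n - k - 1).factorial / (n + k).factorial

/-- The coefficient of `koecherKernel n (k + 1)` in the expansion of `1 / n⁵`. -/
noncomputable def koecherCoeff (k : ℕ) : ℝ := (-1) ^ (k + 1) * k.factorial ^ 2 * H 2 k

/-- Up to the factor `2k`, an antidifference in `n` of `koecherKernel n k`. -/
noncomputable def koecherTail (n k : ℕ) : ℝ := (n - k).factorial / (n + k).factorial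

lemma koecherKernel_eq_mul_succ {n k : ℕ} (h : k + 2 ≤ n) :
    koecherKernel n k = ((n : ℝ) ^ 2 - (k + 1) ^ 2) * koecherKernel n (k + 1) := by
  obtain ⟨d, rfl⟩ := Nat.exists_eq_add_of_le h
  rw [koecherKernel, koecherKernel, show k + 2 + d - k - 1 = d + 1 by omega,
    show k + 2 + d - (k + 1) - 1 = d by omega,
    show k + 2 + d + (k + 1) = k + 2 + d + k + 1 by ring, Nat.factorial_succ, Nat.factorial_succ]
  push_cast
  field_simp
  ring

lemma koecherKernel_zero_right {n : ℕ} (h : n ≠ 0) : koecherKernel n 0 = 1 / n := by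
  obtain ⟨m, rfl⟩ := Nat.exists_eq_succ_of_ne_zero h
  rw [koecherKernel, Nat.succ_eq_add_one, Nat.sub_zero, add_tsub_cancel_right, add_zero,
    Nat.factorial_succ]
  push_cast
  field_simp

lemma one_div_pow_five_eq_sum_koecherKernel {n K : ℕ} (h : K + 1 ≤ n) : 1 / (n : ℝ) ^ 5 =
    ∑ k ∈ range K, koecherCoeff k * koecherKernel n (k + 1) +
      (-1) ^ K * K.factorial ^ 2 * (1 / (n : ℝ) ^ 4 - H 2 K / n ^ 2) * koecherKernel n K := by
  have hn : (n : ℝ) ≠ 0 := Nat.cast_ne_zero.2 (by omega)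
  induction K with
  | zero =>
    rw [koecherKernel_zero_right (by omega), H_zero, sum_range_zero, Nat.factorial_zero]
    push_cast
    field_simp
    ring
  | succ K ih =>
    rw [ih (by omega), sum_range_succ, add_assoc, koecherKernel_eq_mul_succ h, H_succ,
      Nat.factorial_succ, koecherCoeff, pow_succ (-1 : ℝ) K]
    push_cast
    field_simp
    ring

lemma aperyWeight_eq_factorial (n : ℕ) :
    aperyWeight n = (-1) ^ n * n.factorial ^ 2 / ((n + 1) * (2 * (n + 1)).factorial) := by
  have h : ((n + 1).centralBinom : ℝ) * (n + 1).factorial * (n + 1).factorial =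
      (2 * (n + 1)).factorial := by
    rw [Nat.centralBinom_eq_two_mul_choose, two_mul]
    exact_mod_cast Nat.add_choose_mul_factorial_mul_factorial (n + 1) (n + 1)
  have hbinom : ((n + 1).centralBinom : ℝ) ≠ 0 := Nat.cast_ne_zero.2 (Nat.centralBinom_ne_zero _)
  rw [aperyWeight, ← h, Nat.factorial_succ]
  push_cast
  field_simp

lemma one_div_pow_five_eq (n : ℕ) : 1 / ((n : ℝ) + 1) ^ 5 =
    ∑ k ∈ range n, koecherCoeff k * koecherKernel (n + 1) (k + 1) +
      2 * aperyWeight n * (1 / ((n : ℝ) + 1) ^ 2 - H 2 n) := by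
  have h := one_div_pow_five_eq_sum_koecherKernel (le_refl (n + 1))
  rw [koecherKernel, show n + 1 - n - 1 = 0 by omega] at h
  push_cast at h
  rw [h, aperyWeight_eq_factorial, show 2 * (n + 1) = n + 1 + n + 1 by ring,
    Nat.factorial_succ (n + 1 + n)]
  push_cast
  field_simp
  ring

lemma koecherKernel_succ_succ_eq_sub {n k : ℕ} (h : k + 1 ≤ n) :
    koecherKernel (n + 1) (k + 1) =
      (koecherTail n (k + 1) - koecherTail (n + 1) (k + 1)) / (2 * (k + 1)) := by
  obtain ⟨d, rfl⟩ := Nat.exists_eq_add_of_le h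
  rw [koecherKernel, koecherTail, koecherTail, show k + 1 + d + 1 - (k + 1) = d + 1 by omega,
    show k + 1 + d + 1 + (k + 1) = k + 1 + d + (k + 1) + 1 by ring, add_tsub_cancel_right,
    add_tsub_cancel_left, Nat.factorial_succ, Nat.factorial_succ]
  push_cast
  field_simp
  ring

lemma sum_koecherKernel (k e : ℕ) :
    ∑ q ∈ range e, koecherKernel (k + 1 + q + 1) (k + 1) =
      (1 / (2 * (k + 1)).factorial - koecherTail (k + 1 + e) (k + 1)) / (2 * (k + 1)) := by
  have hstart : koecherTail (k + 1) (k + 1) = 1 / (2 * (k + 1)).factorial := by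
    rw [koecherTail, Nat.sub_self, Nat.factorial_zero, Nat.cast_one, two_mul]
  simp only [koecherKernel_succ_succ_eq_sub (Nat.le_add_right (k + 1) _)]
  rw [← sum_div, hstart.symm]
  exact congrArg (· / _) (sum_range_sub' (fun q => koecherTail (k + 1 + q) (k + 1)) e)

lemma sum_one_div_pow_five (N : ℕ) : H 5 N =
    ∑ n ∈ range N, aperyWeight n * (2 / ((n : ℝ) + 1) ^ 2 - 5 / 2 * H 2 n) -
      ∑ k ∈ range N, koecherCoeff k / (2 * (k + 1)) * koecherTail N (k + 1) := by
  rw [H]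
  simp only [one_div_pow_five_eq]
  rw [sum_add_distrib,
    sum_range_sum_range_comm fun k n => koecherCoeff k * koecherKernel (n + 1) (k + 1),
    ← sum_add_distrib, ← sum_sub_distrib]
  refine sum_congr rfl fun k hk => ?_
  obtain ⟨e, rfl⟩ := exists_eq_succ_add (mem_range.1 hk)
  rw [← mul_sum, add_tsub_cancel_left, sum_koecherKernel, aperyWeight_eq_factorial, koecherCoeff,
    pow_succ]
  field_simp
  ring

lemma factorial_mul_factorial_le (m n : ℕ) : m.factorial * n.factorial ≤ (m + n).factorial :=
  Nat.le_of_dvd (m + n).factorial_pos (Nat.factorial_mul_factorial_dvd_factorial_add m n)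

lemma succ_mul_factorial_mul_koecherTail_le {N k : ℕ} (h : k < N) :
    (k + 1).factorial * k.factorial * koecherTail N (k + 1) ≤ 1 / ((N : ℝ) + 1) := by
  obtain ⟨d, rfl⟩ := exists_eq_succ_add h
  have hfactorial : (k + 1).factorial * k.factorial * d.factorial * (k + 1 + d + 1) ≤
      (k + 1 + d + (k + 1)).factorial :=
    calc (k + 1).factorial * k.factorial * d.factorial * (k + 1 + d + 1)
        = (k + 1 + d + 1) * ((k + 1).factorial * d.factorial) * k.factorial := by ring
      _ ≤ (k + 1 + d + 1) * (k + 1 + d).factorial * k.factorial := by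
        gcongr
        exact factorial_mul_factorial_le _ _
      _ = (k + 1 + d + 1).factorial * k.factorial := by rw [Nat.factorial_succ]
      _ ≤ (k + 1 + d + 1 + k).factorial := factorial_mul_factorial_le _ _
      _ = (k + 1 + d + (k + 1)).factorial := by congr 1; ring
  rw [koecherTail, add_tsub_cancel_left, ← mul_div_assoc,
    div_le_div_iff₀ (by positivity) (by positivity), one_mul]
  exact_mod_cast hfactorial

lemma abs_koecherCoeff_mul_koecherTail_le {N k : ℕ} (h : k < N) :
    |koecherCoeff k / (2 * (k + 1)) * koecherTail N (k + 1)| ≤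
      zeta 2 / (((k : ℝ) + 1) ^ 2 * (N + 1)) := by
  have htail : 0 ≤ koecherTail N (k + 1) := by rw [koecherTail]; positivity
  calc |koecherCoeff k / (2 * (k + 1)) * koecherTail N (k + 1)|
      = H 2 k * ((k + 1).factorial * k.factorial * koecherTail N (k + 1)) /
          (2 * ((k : ℝ) + 1) ^ 2) := by
        rw [koecherCoeff, mul_assoc, mul_div_assoc, mul_assoc, abs_mul, abs_neg_one_pow, one_mul,
          abs_of_nonneg (mul_nonneg (div_nonneg (mul_nonneg (by positivity) (H_nonneg 2 k))
            (by positivity)) htail), Nat.factorial_succ]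
        push_cast
        field_simp
    _ ≤ zeta 2 * (1 / ((N : ℝ) + 1)) / (1 * ((k : ℝ) + 1) ^ 2) := by
        have hzeta : 0 ≤ zeta 2 := (H_nonneg 2 k).trans (H_le_zeta le_rfl k)
        gcongr
        · exact H_le_zeta le_rfl k
        · exact succ_mul_factorial_mul_koecherTail_le h
        · norm_num
    _ = zeta 2 / (((k : ℝ) + 1) ^ 2 * (N + 1)) := by field_simp

lemma tendsto_sum_aperyWeight_koecher : Tendsto (fun N => ∑ n ∈ range N,
    aperyWeight n * (2 / ((n : ℝ) + 1) ^ 2 - 5 / 2 * H 2 n)) atTop (𝓝 (zeta 5)) := by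
  have herror := tendsto_sum_range_zero_of_abs_le fun N k (h : k < N) =>
    abs_koecherCoeff_mul_koecherTail_le h
  refine (((tendsto_H (s := 5) (by norm_num)).add herror).congr fun N => ?_).trans
    (by rw [add_zero])
  rw [sum_one_div_pow_five, sub_add_cancel]

end KoecherSeries

end CentralBinomialSum

theorem stmt_7 :
    Tendsto (fun N => ∑ n ∈ Finset.range N,
      (-1:ℝ)^n / (((n:ℝ)+1)^3 * ((2*(n+1)).choose (n+1) : ℝ)) *
        (H 2 (2*n+1) - 123/16 * H 2 n))
      atTop (𝓝 (451 * zeta 5 / 40 - 14 * Real.pi^2 * zeta 3 / 15)) := by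
  have hlim := CentralBinomialSum.tendsto_sum_aperyWeight_accel.add
    (CentralBinomialSum.tendsto_sum_aperyWeight_koecher.const_mul (27 / 8))
  refine (hlim.congr fun N => ?_).trans (by rw [CentralBinomialSum.zeta_two]; ring_nf; rfl)
  rw [Finset.mul_sum, ← Finset.sum_add_distrib]
  refine Finset.sum_congr rfl fun n _ => ?_
  rw [CentralBinomialSum.aperyWeight, Nat.centralBinom_eq_two_mul_choose, ← div_div 27]
  ring
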